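/- For all trace-class-operator-valued Schwartz functions f ∈ S(ℝ^d×ℝ^d, L¹(H',H'')), g ∈ S(ℝ^d×ℝ^d, L¹(H,H')) and h ∈ S(ℝ^d×ℝ^d, L¹(H,H'')), with the sesquilinear pairings ⟨u,v⟩ := ∫ tr(u(X)* v(X)) dX (trace over the initial Hilbert space of the values of u and v), the following identities hold: ⟨f ♯ g, h⟩ = ⟨f, h ♯ g*⟩ = ⟨f, (g ♯ h*)*⟩ and ⟨f ♯ g, h⟩ = ⟨g, f* ♯ h⟩ = ⟨g, (h* ♯ f)*⟩, where u* denotes the pointwise Hilbert space adjoint u*(X) := u(X)*. -/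

import Mathlib

open MeasureTheory Complex SchwartzMap
open scoped Real ENNReal NNReal

set_option maxHeartbeats 1000000
set_option synthInstance.maxHeartbeats 1000000

noncomputable section

local notation "⟪" x ", " y "⟫_ℝ" => @inner ℝ _ _ x y
local notation "⟪" x ", " y "⟫_ℂ" => @inner ℂ _ _ x y

/-- Euclidean configuration space. -/
abbrev Ed (d : ℕ) : Type := EuclideanSpace ℝ (Fin d)

/-- Line integral of the vector potential `A` along the segment `[x, y]`. -/
def lineInt {d : ℕ} (A : Ed d → Ed d) (x y : Ed d) : ℝ :=
  ∫ s in (0:ℝ)..(1:ℝ), ⟪A (x + s • (y - x)), y - x⟫_ℝ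

/-- The phase `e^{-i(y-x)·η} e^{-i(λ/ε)Γ_A(εx,εy)}` of the magnetic Weyl quantization. -/
def wPhase {d : ℕ} (ε lam : ℝ) (A : Ed d → Ed d) (x y η : Ed d) : ℂ :=
  Complex.exp (-Complex.I * ((⟪y - x, η⟫_ℝ : ℝ) : ℂ)) *
    Complex.exp (-Complex.I * (((lam / ε) * lineInt A (ε • x) (ε • y) : ℝ) : ℂ))

/-- Magnetic Weyl quantization of an operator-valued symbol (absolutely convergent version,
with the momentum integral innermost, suitable for Schwartz-class symbols). -/
def opA {d : ℕ} {H H' : Type*} [NormedAddCommGroup H] [NormedSpace ℂ H]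
    [NormedAddCommGroup H'] [NormedSpace ℂ H']
    (ε lam : ℝ) (A : Ed d → Ed d) (f : Ed d × Ed d → (H →L[ℂ] H')) (Ψ : Ed d → H) :
    Ed d → H' :=
  fun x => (((2 * Real.pi) ^ d)⁻¹ : ℝ) •
    ∫ y : Ed d, ∫ η : Ed d, wPhase ε lam A x y η • f ((ε / 2) • (x + y), η) (Ψ y)

/-- Magnetic Weyl quantization as an (iterated, oscillatory) integral with the momentum
integral outermost; this realizes the oscillatory integral for Hörmander-class symbols. -/
def opW {d : ℕ} {H H' : Type*} [NormedAddCommGroup H] [NormedSpace ℂ H]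
    [NormedAddCommGroup H'] [NormedSpace ℂ H']
    (ε lam : ℝ) (A : Ed d → Ed d) (f : Ed d × Ed d → (H →L[ℂ] H')) (Ψ : Ed d → H) :
    Ed d → H' :=
  fun x => (((2 * Real.pi) ^ d)⁻¹ : ℝ) •
    ∫ η : Ed d, ∫ y : Ed d, wPhase ε lam A x y η • f ((ε / 2) • (x + y), η) (Ψ y)

/-- Directional derivative of a phase-space function. -/
def dirD {d : ℕ} {F : Type*} [NormedAddCommGroup F] [NormedSpace ℝ F]
    (v : Ed d × Ed d) (g : Ed d × Ed d → F) : Ed d × Ed d → F :=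
  fun p => fderiv ℝ g p v

/-- Directions corresponding to the multi-indices `a` (position) and `α` (momentum). -/
def mkDirs {d : ℕ} (a α : List (Fin d)) : List (Ed d × Ed d) :=
  (a.map fun j => ((EuclideanSpace.single j (1:ℝ) : Ed d), (0 : Ed d))) ++
    α.map fun j => ((0 : Ed d), (EuclideanSpace.single j (1:ℝ) : Ed d))

/-- The iterated partial derivative `∂_x^a ∂_ξ^α f`. -/
def mDeriv {d : ℕ} {F : Type*} [NormedAddCommGroup F] [NormedSpace ℝ F]
    (a α : List (Fin d)) (f : Ed d × Ed d → F) : Ed d × Ed d → F :=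
  (mkDirs a α).foldr dirD f

/-- The Japanese bracket `⟨ξ⟩ = (1+|ξ|²)^{1/2}`. -/
def jb {d : ℕ} (ξ : Ed d) : ℝ := Real.sqrt (1 + ‖ξ‖ ^ 2)

/-- Operator-valued Hörmander class `S^m_{ρ,δ}(B(H,H'))`. -/
structure IsHormander {d : ℕ} {H H' : Type*} [NormedAddCommGroup H] [NormedSpace ℂ H]
    [NormedAddCommGroup H'] [NormedSpace ℂ H'] (m ρ δ : ℝ)
    (f : Ed d × Ed d → (H →L[ℂ] H')) : Prop where
  smooth : ContDiff ℝ (⊤ : ℕ∞) f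
  bound : ∀ a α : List (Fin d), ∃ C : ℝ, ∀ p : Ed d × Ed d,
    ‖mDeriv a α f p‖ ≤ C * jb p.2 ^ (m - ρ * (α.length : ℝ) + δ * (a.length : ℝ))

/-- `A` is smooth with polynomially bounded derivatives of all orders. -/
def IsPolyVF {d : ℕ} (A : Ed d → Ed d) : Prop :=
  ContDiff ℝ (⊤ : ℕ∞) A ∧ ∀ n : ℕ, ∃ C : ℝ, ∃ k : ℕ, ∀ x, ‖iteratedFDeriv ℝ n A x‖ ≤ C * (1 + ‖x‖) ^ k

/-- Components `B_{jl} = ∂_j A_l − ∂_l A_j` of the magnetic field `B = dA`. -/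
def Bcomp {d : ℕ} (A : Ed d → Ed d) (x : Ed d) (j l : Fin d) : ℝ :=
  fderiv ℝ (fun z => A z l) x (EuclideanSpace.single j (1:ℝ)) -
    fderiv ℝ (fun z => A z j) x (EuclideanSpace.single l (1:ℝ))

/-- The magnetic field `B = dA` is bounded with bounded derivatives of all orders. -/
def IsBoundedField {d : ℕ} (A : Ed d → Ed d) : Prop :=
  ∀ (j l : Fin d) (n : ℕ), ∃ C : ℝ, ∀ x, ‖iteratedFDeriv ℝ n (fun z => Bcomp A z j l) x‖ ≤ C


/-- The trace norm of a bounded operator between Hilbert spaces, characterized as the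
supremum of `∑ |⟨v i, T (e i)⟩|` over finite orthonormal families. -/
def traceNormE {H H' : Type*} [NormedAddCommGroup H] [InnerProductSpace ℂ H]
    [NormedAddCommGroup H'] [InnerProductSpace ℂ H'] (T : H →L[ℂ] H') : ℝ≥0∞ :=
  ⨆ (n : ℕ) (e : Fin n → H) (v : Fin n → H') (_ : Orthonormal ℂ e) (_ : Orthonormal ℂ v),
    ENNReal.ofReal (∑ i, ‖⟪v i, T (e i)⟫_ℂ‖)

/-- `T` is a trace class operator. -/
def IsTraceClass {H H' : Type*} [NormedAddCommGroup H] [InnerProductSpace ℂ H]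
    [NormedAddCommGroup H'] [InnerProductSpace ℂ H'] (T : H →L[ℂ] H') : Prop :=
  traceNormE T < ⊤

/-- The trace of an operator on a Hilbert space (computed in some fixed Hilbert basis;
for trace class operators this is basis independent). -/
def trH {H : Type*} [NormedAddCommGroup H] [InnerProductSpace ℂ H] [CompleteSpace H]
    (T : H →L[ℂ] H) : ℂ :=
  ∑' i : (exists_hilbertBasis ℂ H).choose,
    ⟪((exists_hilbertBasis ℂ H).choose_spec.choose i : H),
      T ((exists_hilbertBasis ℂ H).choose_spec.choose i)⟫_ℂ

/-- `f` is a Schwartz function with values in the trace class operators `L¹(H,H')`: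
all of its derivatives decay, in trace norm, faster than any inverse polynomial. -/
def TCSchwartz {d : ℕ} {H H' : Type*} [NormedAddCommGroup H] [InnerProductSpace ℂ H]
    [NormedAddCommGroup H'] [InnerProductSpace ℂ H']
    (f : SchwartzMap (Ed d × Ed d) (H →L[ℂ] H')) : Prop :=
  (∀ X : Ed d × Ed d, IsTraceClass (f X)) ∧
    ∀ (k : ℕ) (a α : List (Fin d)), ∃ C : ℝ,
      ∀ X : Ed d × Ed d,
        ENNReal.ofReal ((1 + ‖X‖) ^ k) * traceNormE (mDeriv a α (⇑f) X) ≤ ENNReal.ofReal C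

/-- The sesquilinear pairing `⟨u,v⟩ = ∫ tr(u(X)* v(X)) dX` (trace over the initial space). -/
def tcPair {d : ℕ} {K K' : Type*} [NormedAddCommGroup K] [InnerProductSpace ℂ K]
    [CompleteSpace K] [NormedAddCommGroup K'] [InnerProductSpace ℂ K'] [CompleteSpace K']
    (u v : Ed d × Ed d → (K →L[ℂ] K')) : ℂ :=
  ∫ X : Ed d × Ed d, trH ((ContinuousLinearMap.adjoint (u X)).comp (v X))

set_option linter.unusedSectionVars false

section AbstractL2

open scoped ComplexConjugate

lemma cs_lintegral {α : Type*} [MeasurableSpace α] (μ : Measure α) {f g : α → ℝ≥0∞}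
    (hf : AEMeasurable f μ) (hg : AEMeasurable g μ) :
    (∫⁻ a, f a * g a ∂μ) ^ 2 ≤ (∫⁻ a, f a ^ 2 ∂μ) * (∫⁻ a, g a ^ 2 ∂μ) := by
  have h := ENNReal.lintegral_mul_le_Lp_mul_Lq μ Real.HolderConjugate.two_two hf hg
  have h2 := pow_le_pow_left' h 2
  refine h2.trans (le_of_eq ?_)
  rw [mul_pow, ← ENNReal.rpow_natCast, ← ENNReal.rpow_natCast, ← ENNReal.rpow_mul,
    ← ENNReal.rpow_mul]
  norm_num

variable {α β γ : Type*} [MeasurableSpace α] [MeasurableSpace β] [MeasurableSpace γ]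
  (μ : Measure α) (ν : Measure β) (τ : Measure γ) [SigmaFinite μ] [SigmaFinite ν] [SigmaFinite τ]

lemma kernel_l2 {F : α × β → ℂ} {G : β × γ → ℂ} (hF : Measurable F) (hG : Measurable G) :
    ∫⁻ p : α × γ, (∫⁻ b, ‖F (p.1, b)‖ₑ * ‖G (b, p.2)‖ₑ ∂ν) ^ 2 ∂(μ.prod τ) ≤
      (∫⁻ p, ‖F p‖ₑ ^ 2 ∂(μ.prod ν)) * (∫⁻ p, ‖G p‖ₑ ^ 2 ∂(ν.prod τ)) := by
  have h1 : ∀ p : α × γ, (∫⁻ b, ‖F (p.1, b)‖ₑ * ‖G (b, p.2)‖ₑ ∂ν) ^ 2 ≤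
      (∫⁻ b, ‖F (p.1, b)‖ₑ ^ 2 ∂ν) * (∫⁻ b, ‖G (b, p.2)‖ₑ ^ 2 ∂ν) := fun p =>
    cs_lintegral ν (by fun_prop) (by fun_prop)
  refine (lintegral_mono h1).trans (le_of_eq ?_)
  have e1 : Measurable fun a => ∫⁻ b, ‖F (a, b)‖ₑ ^ 2 ∂ν :=
    Measurable.lintegral_prod_right' (f := fun p => ‖F p‖ₑ ^ 2) (by fun_prop)
  have e2 : Measurable fun c => ∫⁻ b, ‖G (b, c)‖ₑ ^ 2 ∂ν :=
    Measurable.lintegral_prod_left' (f := fun p => ‖G p‖ₑ ^ 2) (by fun_prop)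
  rw [lintegral_prod_mul e1.aemeasurable e2.aemeasurable,
    lintegral_prod (fun p => ‖F p‖ₑ ^ 2) (by fun_prop),
    lintegral_prod_symm (fun p => ‖G p‖ₑ ^ 2) (by fun_prop)]

lemma kernel_ae_integrable {F : α × β → ℂ} {G : β × γ → ℂ} (hF : Measurable F)
    (hG : Measurable G) (hF2 : ∫⁻ p, ‖F p‖ₑ ^ 2 ∂(μ.prod ν) < ⊤)
    (hG2 : ∫⁻ p, ‖G p‖ₑ ^ 2 ∂(ν.prod τ) < ⊤) :
    ∀ᵐ p ∂(μ.prod τ), Integrable (fun b => F (p.1, b) * G (b, p.2)) ν := by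
  have h := (kernel_l2 μ ν τ hF hG).trans_lt (ENNReal.mul_lt_top hF2 hG2)
  have hm : Measurable fun p : α × γ => (∫⁻ b, ‖F (p.1, b)‖ₑ * ‖G (b, p.2)‖ₑ ∂ν) ^ 2 := by
    refine Measurable.pow_const ?_ 2
    exact Measurable.lintegral_prod_right'
      (f := fun q : (α × γ) × β => ‖F (q.1.1, q.2)‖ₑ * ‖G (q.2, q.1.2)‖ₑ) (by fun_prop)
  filter_upwards [ae_lt_top hm h.ne] with p hp
  refine ⟨by fun_prop, ?_⟩
  rw [hasFiniteIntegral_iff_enorm]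
  simp only [enorm_mul]
  by_contra hcon
  rw [not_lt, top_le_iff] at hcon
  simp [hcon] at hp

lemma kernel_comp_l2 {F : α × β → ℂ} {G : β × γ → ℂ} (hF : Measurable F)
    (hG : Measurable G) (hF2 : ∫⁻ p, ‖F p‖ₑ ^ 2 ∂(μ.prod ν) < ⊤)
    (hG2 : ∫⁻ p, ‖G p‖ₑ ^ 2 ∂(ν.prod τ) < ⊤) :
    ∫⁻ p : α × γ, ‖∫ b, F (p.1, b) * G (b, p.2) ∂ν‖ₑ ^ 2 ∂(μ.prod τ) < ⊤ := by
  refine lt_of_le_of_lt (lintegral_mono fun p => ?_)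
    ((kernel_l2 μ ν τ hF hG).trans_lt (ENNReal.mul_lt_top hF2 hG2))
  gcongr
  refine (enorm_integral_le_lintegral_enorm _).trans (le_of_eq ?_)
  simp only [enorm_mul]

lemma kernel_triple_integrable {F : α × β → ℂ} {G : β × γ → ℂ} {H : α × γ → ℂ}
    (hF : Measurable F) (hG : Measurable G) (hH : Measurable H)
    (hF2 : ∫⁻ p, ‖F p‖ₑ ^ 2 ∂(μ.prod ν) < ⊤)
    (hG2 : ∫⁻ p, ‖G p‖ₑ ^ 2 ∂(ν.prod τ) < ⊤)
    (hH2 : ∫⁻ p, ‖H p‖ₑ ^ 2 ∂(μ.prod τ) < ⊤) :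
    Integrable (fun q : (α × γ) × β => conj (F (q.1.1, q.2) * G (q.2, q.1.2)) * H q.1)
      ((μ.prod τ).prod ν) := by
  have hmeas : Measurable
      (fun q : (α × γ) × β => conj (F (q.1.1, q.2) * G (q.2, q.1.2)) * H q.1) := by
    have : Measurable (fun q : (α × γ) × β => F (q.1.1, q.2) * G (q.2, q.1.2)) := by fun_prop
    exact (Complex.continuous_conj.measurable.comp this).mul (by fun_prop)
  refine ⟨hmeas.aestronglyMeasurable, ?_⟩
  rw [hasFiniteIntegral_iff_enorm, lintegral_prod _ (by fun_prop)]
  have e : ∀ p : α × γ, ∫⁻ b, ‖conj (F (p.1, b) * G (b, p.2)) * H p‖ₑ ∂ν =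
      (∫⁻ b, ‖F (p.1, b)‖ₑ * ‖G (b, p.2)‖ₑ ∂ν) * ‖H p‖ₑ := by
    intro p
    rw [← lintegral_mul_const _ (by fun_prop)]
    refine lintegral_congr fun b => ?_
    rw [enorm_mul, RCLike.enorm_conj, enorm_mul]
  simp only [e]
  have hm : Measurable fun p : α × γ => (∫⁻ b, ‖F (p.1, b)‖ₑ * ‖G (b, p.2)‖ₑ ∂ν) :=
    Measurable.lintegral_prod_right'
      (f := fun q : (α × γ) × β => ‖F (q.1.1, q.2)‖ₑ * ‖G (q.2, q.1.2)‖ₑ) (by fun_prop)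
  have h := cs_lintegral (μ.prod τ) hm.aemeasurable hH.enorm.aemeasurable
  have h' := h.trans_lt (ENNReal.mul_lt_top
    ((kernel_l2 μ ν τ hF hG).trans_lt (ENNReal.mul_lt_top hF2 hG2)) hH2)
  by_contra hcon
  rw [not_lt, top_le_iff] at hcon
  simp [hcon] at h'

lemma kernel_triple_one {F : α × β → ℂ} {G : β × γ → ℂ} {H : α × γ → ℂ}
    (hF : Measurable F) (hG : Measurable G) (hH : Measurable H)
    (hF2 : ∫⁻ p, ‖F p‖ₑ ^ 2 ∂(μ.prod ν) < ⊤)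
    (hG2 : ∫⁻ p, ‖G p‖ₑ ^ 2 ∂(ν.prod τ) < ⊤)
    (hH2 : ∫⁻ p, ‖H p‖ₑ ^ 2 ∂(μ.prod τ) < ⊤) :
    ∫ p : α × γ, conj (∫ b, F (p.1, b) * G (b, p.2) ∂ν) * H p ∂(μ.prod τ) =
      ∫ p : α × β, conj (F p) * ∫ c, H (p.1, c) * conj (G (p.2, c)) ∂τ ∂(μ.prod ν) := by
  have hI := kernel_triple_integrable μ ν τ hF hG hH hF2 hG2 hH2
  have mp : MeasurePreserving (fun q : (α × β) × γ => ((q.1.1, q.2), q.1.2))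
      ((μ.prod ν).prod τ) ((μ.prod τ).prod ν) :=
    ((measurePreserving_prodAssoc μ τ ν).symm _).comp
      (((MeasurePreserving.id μ).prod Measure.measurePreserving_swap).comp
        (measurePreserving_prodAssoc μ ν τ))
  have me : MeasurableEmbedding (fun q : (α × β) × γ => ((q.1.1, q.2), q.1.2)) :=
    (MeasurableEquiv.prodAssoc.trans
      (((MeasurableEquiv.refl α).prodCongr MeasurableEquiv.prodComm).trans
        MeasurableEquiv.prodAssoc.symm)).measurableEmbedding
  have hI2 := (mp.integrable_comp_emb me).2 hI
  have h1 := integral_prod _ hI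
  have h2 := integral_prod _ hI2
  have h3 := mp.integral_comp me
    (fun q : (α × γ) × β => conj (F (q.1.1, q.2) * G (q.2, q.1.2)) * H q.1)
  simp only [Function.comp_def] at h2
  rw [h2, h1] at h3
  dsimp only at h3
  convert h3.symm using 2
  · ext p
    rw [integral_mul_const]
    congr 1
    exact integral_conj.symm
  · ext p
    rw [← integral_const_mul]
    congr 1
    ext c
    simp only [map_mul]
    ring

lemma kernel_triple_two {F : α × β → ℂ} {G : β × γ → ℂ} {H : α × γ → ℂ}
    (hF : Measurable F) (hG : Measurable G) (hH : Measurable H)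
    (hF2 : ∫⁻ p, ‖F p‖ₑ ^ 2 ∂(μ.prod ν) < ⊤)
    (hG2 : ∫⁻ p, ‖G p‖ₑ ^ 2 ∂(ν.prod τ) < ⊤)
    (hH2 : ∫⁻ p, ‖H p‖ₑ ^ 2 ∂(μ.prod τ) < ⊤) :
    ∫ p : α × γ, conj (∫ b, F (p.1, b) * G (b, p.2) ∂ν) * H p ∂(μ.prod τ) =
      ∫ p : β × γ, conj (G p) * ∫ a, conj (F (a, p.1)) * H (a, p.2) ∂μ ∂(ν.prod τ) := by
  have hI := kernel_triple_integrable μ ν τ hF hG hH hF2 hG2 hH2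
  have mp : MeasurePreserving (fun q : (β × γ) × α => ((q.2, q.1.2), q.1.1))
      ((ν.prod τ).prod μ) ((μ.prod τ).prod ν) :=
    ((measurePreserving_prodAssoc μ τ ν).symm _).comp
      (((MeasurePreserving.id μ).prod Measure.measurePreserving_swap).comp
        Measure.measurePreserving_swap)
  have me : MeasurableEmbedding (fun q : (β × γ) × α => ((q.2, q.1.2), q.1.1)) :=
    (MeasurableEquiv.prodComm.trans
      (((MeasurableEquiv.refl α).prodCongr MeasurableEquiv.prodComm).trans
        MeasurableEquiv.prodAssoc.symm)).measurableEmbedding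
  have hI2 := (mp.integrable_comp_emb me).2 hI
  have h1 := integral_prod _ hI
  have h2 := integral_prod _ hI2
  have h3 := mp.integral_comp me
    (fun q : (α × γ) × β => conj (F (q.1.1, q.2) * G (q.2, q.1.2)) * H q.1)
  simp only [Function.comp_def] at h2
  rw [h2, h1] at h3
  dsimp only at h3
  convert h3.symm using 2
  · ext p
    rw [integral_mul_const]
    congr 1
    exact integral_conj.symm
  · ext p
    rw [← integral_const_mul]
    congr 1
    ext c
    simp only [map_mul]
    ring

/-- The middle-four interchange is measure preserving. -/
lemma measurePreserving_four {δ : Type*} [MeasurableSpace δ] (σ : Measure δ) [SigmaFinite σ] :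
    MeasurePreserving (fun q : (α × β) × (γ × δ) => ((q.1.1, q.2.1), (q.1.2, q.2.2)))
      ((μ.prod ν).prod (τ.prod σ)) ((μ.prod τ).prod (ν.prod σ)) := by
  refine ⟨by fun_prop, Measure.ext_of_lintegral _ fun f hf => ?_⟩
  have hf' : Measurable fun q : (α × β) × (γ × δ) => f ((q.1.1, q.2.1), (q.1.2, q.2.2)) := by
    fun_prop
  rw [lintegral_map hf (by fun_prop), lintegral_prod _ hf'.aemeasurable,
    lintegral_prod _ hf.aemeasurable,
    lintegral_prod _ (Measurable.lintegral_prod_right' hf').aemeasurable,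
    lintegral_prod _ (Measurable.lintegral_prod_right' hf).aemeasurable]
  refine lintegral_congr fun a => ?_
  have e1 : ∀ b, ∫⁻ y : γ × δ, f ((a, y.1), (b, y.2)) ∂(τ.prod σ) =
      ∫⁻ c, ∫⁻ e, f ((a, c), (b, e)) ∂σ ∂τ := fun b => lintegral_prod _ (by fun_prop)
  have e2 : ∀ c, ∫⁻ y : β × δ, f ((a, c), y) ∂(ν.prod σ) =
      ∫⁻ b, ∫⁻ e, f ((a, c), (b, e)) ∂σ ∂ν := fun b => lintegral_prod _ (by fun_prop)
  simp only [e1, e2]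
  refine lintegral_lintegral_swap ?_
  refine Measurable.aemeasurable ?_
  exact Measurable.lintegral_prod_right'
    (f := fun q : (β × γ) × δ => f ((a, q.1.2), (q.1.1, q.2))) (by fun_prop)

end AbstractL2

section TraceHS

variable {H H' : Type*} [NormedAddCommGroup H] [InnerProductSpace ℂ H] [CompleteSpace H]
  [NormedAddCommGroup H'] [InnerProductSpace ℂ H'] [CompleteSpace H']

lemma countable_of_hilbertBasis [TopologicalSpace.SeparableSpace H] {ι : Type*}
    (b : HilbertBasis ι ℂ H) : Countable ι := by
  refine Set.countable_univ_iff.1 ?_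
  have hsep : ∀ i j : ι, i ≠ j → 1 ≤ dist (b i) (b j) := by
    intro i j hij
    have h1 : ‖b i - b j‖ * ‖b i - b j‖ = 2 := by
      have := norm_sub_sq (𝕜 := ℂ) (b i) (b j)
      have h0 : @inner ℂ H _ (b i) (b j) = 0 := b.orthonormal.2 hij
      rw [h0, b.orthonormal.1 i, b.orthonormal.1 j] at this
      rw [← sq, this]; norm_num
    rw [dist_eq_norm]
    nlinarith [norm_nonneg (b i - b j)]
  have := Set.PairwiseDisjoint.countable_of_isOpen (a := Set.univ)
    (s := fun i : ι => Metric.ball (b i) (1 / 2)) (by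
      intro i _ j _ hij
      exact Metric.ball_disjoint_ball (by have := hsep i j hij; linarith))
    (fun i _ => Metric.isOpen_ball) (fun i _ => ⟨b i, by simp⟩)
  exact this

/-- Finite orthonormal families: the Hilbert-Schmidt sum is bounded by the trace norm. -/
lemma finite_hs_le (T : H →L[ℂ] H') {ι : Type*} (s : Finset ι) (e : ι → H)
    (he : Orthonormal ℂ e) :
    ∑ i ∈ s, ‖T (e i)‖ₑ ^ 2 ≤ traceNormE T ^ 2 := by
  classical
  let V : Submodule ℂ H := Submodule.span ℂ (e '' s)
  have : FiniteDimensional ℂ V :=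
    FiniteDimensional.span_of_finite ℂ (s.finite_toSet.image e)
  have hb1o : Orthonormal ℂ (fun i : s =>
      (⟨e i, Submodule.subset_span ⟨i, i.2, rfl⟩⟩ : V)) := by
    have := he.comp (fun i : s => (i : ι)) Subtype.val_injective
    exact ⟨fun i => this.1 i, fun i j hij => this.2 hij⟩
  have hb1s : ⊤ ≤ Submodule.span ℂ (Set.range fun i : s =>
      (⟨e i, Submodule.subset_span ⟨i, i.2, rfl⟩⟩ : V)) := by
    intro x _
    have hx : (x : H) ∈ Submodule.span ℂ (V.subtype '' (Set.range fun i : s =>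
      (⟨e i, Submodule.subset_span ⟨i, i.2, rfl⟩⟩ : V))) := by
      convert x.2 using 2
      ext y
      constructor
      · rintro ⟨_, ⟨i, rfl⟩, rfl⟩
        exact ⟨i, i.2, rfl⟩
      · rintro ⟨i, hi, rfl⟩
        exact ⟨_, ⟨⟨i, hi⟩, rfl⟩, rfl⟩
    rw [Submodule.span_image] at hx
    obtain ⟨y, hy, hyx⟩ := hx
    rwa [← Subtype.ext hyx]
  let b1 : OrthonormalBasis s ℂ V := OrthonormalBasis.mk hb1o hb1s
  have hb1 : ∀ i : s, ((b1 i : V) : H) = e i := by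
    intro i
    have := congrFun (OrthonormalBasis.coe_mk (𝕜 := ℂ) hb1o hb1s) i
    exact congrArg Subtype.val this
  let W : V →L[ℂ] H' := T.comp V.subtypeL
  let S : V →L[ℂ] V := (ContinuousLinearMap.adjoint W).comp W
  have hS : (S : V →ₗ[ℂ] V).IsSymmetric := by
    intro x y
    simp [S, ContinuousLinearMap.adjoint_inner_left, ContinuousLinearMap.adjoint_inner_right]
  let n := Module.finrank ℂ V
  let u := hS.eigenvectorBasis (n := n) rfl
  have hinner : ∀ x y : V, @inner ℂ H' _ (T x) (T y) = @inner ℂ V _ x (S y) := by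
    intro x y
    simp [S, ContinuousLinearMap.adjoint_inner_right, W]
  have hSu : ∀ k, S (u k) = ((hS.eigenvalues rfl k : ℝ) : ℂ) • u k := fun k =>
    hS.apply_eigenvectorBasis rfl k
  have hort : ∀ j k, j ≠ k → @inner ℂ H' _ (T (u j)) (T (u k)) = 0 := by
    intro j k hjk
    rw [hinner, hSu, inner_smul_right, u.orthonormal.2 hjk, mul_zero]
  have htr : ∑ i ∈ s, ‖T (e i)‖ ^ 2 = ∑ k, ‖T (u k)‖ ^ 2 := by
    have h1 := LinearMap.trace_eq_sum_inner (S : V →ₗ[ℂ] V) b1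
    have h2 := LinearMap.trace_eq_sum_inner (S : V →ₗ[ℂ] V) u
    rw [h1] at h2
    simp only [ContinuousLinearMap.coe_coe, ← hinner, inner_self_eq_norm_sq_to_K, hb1] at h2
    rw [← Finset.sum_coe_sort]
    exact_mod_cast h2
  -- trace norm dominates the sum of the norms
  have hle : ENNReal.ofReal (∑ k, ‖T (u k)‖) ≤ traceNormE T := by
    let K : Finset (Fin n) := Finset.univ.filter fun k => T (u k) ≠ 0
    let φ := K.equivFin.symm
    let m := K.card
    let e' : Fin m → H := fun k => (u (φ k) : V)
    let v' : Fin m → H' := fun k => ((‖T (u (φ k))‖⁻¹ : ℝ) : ℂ) • T (u (φ k))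
    have hφ : ∀ k, T (u (φ k)) ≠ 0 := fun k => (Finset.mem_filter.1 (φ k).2).2
    have hφinj : Function.Injective fun k => ((φ k : K) : Fin n) :=
      Subtype.val_injective.comp φ.injective
    have he' : Orthonormal ℂ e' := by
      have := u.orthonormal.comp _ hφinj
      exact ⟨fun k => this.1 k, fun j k hjk => this.2 hjk⟩
    have hv' : Orthonormal ℂ v' := by
      constructor
      · intro k
        simp only [v', norm_smul, Complex.norm_real, norm_inv, norm_norm]
        exact inv_mul_cancel₀ (norm_ne_zero_iff.2 (hφ k))
      · intro j k hjk
        simp only [v', inner_smul_left, inner_smul_right]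
        rw [hort _ _ (fun h => hjk (hφinj h))]
        simp
    have hval : ∑ k, ‖@inner ℂ H' _ (v' k) (T (e' k))‖ = ∑ k, ‖T (u k)‖ := by
      have h1 : ∀ k, ‖@inner ℂ H' _ (v' k) (T (e' k))‖ = ‖T (u (φ k))‖ := by
        intro k
        simp only [v', e', inner_smul_left, inner_self_eq_norm_sq_to_K, Complex.conj_ofReal]
        have : ‖T (u (φ k))‖ ≠ 0 := norm_ne_zero_iff.2 (hφ k)
        simp only [norm_mul, norm_pow, Complex.norm_real, norm_inv, norm_norm,
          Complex.coe_algebraMap]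
        field_simp
      simp only [h1]
      rw [Equiv.sum_comp φ (fun k : K => ‖T (u k)‖), Finset.sum_coe_sort K (fun k => ‖T (u k)‖)]
      rw [Finset.sum_filter_of_ne]
      intro k _ hk
      exact norm_ne_zero_iff.1 hk
    rw [← hval]
    unfold traceNormE
    exact le_iSup_of_le m (le_iSup_of_le e' (le_iSup_of_le v' (le_iSup_of_le he'
      (le_iSup_of_le hv' le_rfl))))
  have hsq : ∑ k, ‖T (u k)‖ ^ 2 ≤ (∑ k, ‖T (u k)‖) ^ 2 :=
    Finset.sum_sq_le_sq_sum_of_nonneg fun _ _ => norm_nonneg _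
  calc ∑ i ∈ s, ‖T (e i)‖ₑ ^ 2 = ENNReal.ofReal (∑ i ∈ s, ‖T (e i)‖ ^ 2) := by
        rw [ENNReal.ofReal_sum_of_nonneg (fun _ _ => by positivity)]
        refine Finset.sum_congr rfl fun i _ => ?_
        rw [ENNReal.ofReal_pow (norm_nonneg _), ofReal_norm]
    _ ≤ ENNReal.ofReal ((∑ k, ‖T (u k)‖) ^ 2) := by
        rw [htr]; exact ENNReal.ofReal_le_ofReal hsq
    _ = ENNReal.ofReal (∑ k, ‖T (u k)‖) ^ 2 :=
        ENNReal.ofReal_pow (Finset.sum_nonneg fun _ _ => norm_nonneg _) _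
    _ ≤ _ := by gcongr

lemma tsum_hs_le (T : H →L[ℂ] H') {ι : Type*} (b : HilbertBasis ι ℂ H) :
    ∑' i, ‖T (b i)‖ₑ ^ 2 ≤ traceNormE T ^ 2 := by
  rw [ENNReal.tsum_eq_iSup_sum]
  exact iSup_le fun s => finite_hs_le T s b b.orthonormal

lemma parseval_enorm {κ : Type*} (b : HilbertBasis κ ℂ H') (x : H') :
    ∑' j, ‖@inner ℂ H' _ (b j) x‖ₑ ^ 2 = ‖x‖ₑ ^ 2 := by
  have h := b.hasSum_inner_mul_inner x x
  have h2 : HasSum (fun j => ‖@inner ℂ H' _ (b j) x‖ ^ 2) (‖x‖ ^ 2) := by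
    have h3 : (fun j => @inner ℂ H' _ x (b j) * @inner ℂ H' _ (b j) x) =
        fun j => ((‖@inner ℂ H' _ (b j) x‖ ^ 2 : ℝ) : ℂ) := by
      ext j
      rw [← inner_conj_symm x (b j), RCLike.conj_mul]
      simp
    rw [h3, inner_self_eq_norm_sq_to_K] at h
    refine Complex.hasSum_ofReal.1 ?_
    rw [Complex.ofReal_pow]
    exact h
  have h4 := ENNReal.ofReal_tsum_of_nonneg (fun j => by positivity) h2.summable
  rw [h2.tsum_eq] at h4
  rw [← ofReal_norm, ← ENNReal.ofReal_pow (norm_nonneg _), h4]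
  refine tsum_congr fun j => ?_
  rw [ENNReal.ofReal_pow (norm_nonneg _), ofReal_norm]

end TraceHS

section KernelAnalysis

variable {d : ℕ} {E : Type*} [NormedAddCommGroup E] [NormedSpace ℂ E]

instance volume_prod_isAddHaar : (volume : Measure (Ed d × Ed d)).IsAddHaarMeasure :=
  inferInstanceAs ((volume : Measure (Ed d)).prod (volume : Measure (Ed d))).IsAddHaarMeasure

/-- The integral kernel of the magnetic Weyl quantization of `u`. -/
def wker (ε lam : ℝ) (A : Ed d → Ed d) (u : Ed d × Ed d → E) (x y : Ed d) : E :=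
  (((2 * Real.pi) ^ d)⁻¹ : ℝ) •
    ∫ η : Ed d, wPhase ε lam A x y η • u ((ε / 2) • (x + y), η)

lemma norm_wPhase (ε lam : ℝ) (A : Ed d → Ed d) (x y η : Ed d) :
    ‖wPhase ε lam A x y η‖ = 1 := by
  unfold wPhase
  rw [norm_mul, Complex.norm_exp, Complex.norm_exp]
  simp

lemma continuous_lineInt {A : Ed d → Ed d} (hA : Continuous A) :
    Continuous fun p : Ed d × Ed d => lineInt A p.1 p.2 := by
  unfold lineInt
  refine intervalIntegral.continuous_parametric_intervalIntegral_of_continuous'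
    (f := fun (p : Ed d × Ed d) (s : ℝ) => ⟪A (p.1 + s • (p.2 - p.1)), p.2 - p.1⟫_ℝ) ?_ 0 1
  unfold Function.uncurry
  fun_prop

lemma lineInt_symm (A : Ed d → Ed d) (x y : Ed d) : lineInt A x y = -lineInt A y x := by
  unfold lineInt
  have h := intervalIntegral.integral_comp_sub_left (a := 0) (b := 1)
    (fun s : ℝ => ⟪A (y + s • (x - y)), x - y⟫_ℝ) 1
  simp only [sub_self, sub_zero] at h
  rw [← h, ← intervalIntegral.integral_neg]
  refine intervalIntegral.integral_congr fun s _ => ?_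
  have e : y + (1 - s) • (x - y) = x + s • (y - x) := by
    simp only [sub_smul, one_smul, smul_sub]; abel
  simp only [e]
  rw [← inner_neg_right, neg_sub]

lemma continuous_wPhase (ε lam : ℝ) {A : Ed d → Ed d} (hA : Continuous A) :
    Continuous fun q : (Ed d × Ed d) × Ed d => wPhase ε lam A q.1.1 q.1.2 q.2 := by
  unfold wPhase
  have h : Continuous fun q : (Ed d × Ed d) × Ed d => lineInt A (ε • q.1.1) (ε • q.1.2) :=
    (continuous_lineInt hA).comp (g := fun p : Ed d × Ed d => lineInt A p.1 p.2)
      (f := fun q : (Ed d × Ed d) × Ed d => (ε • q.1.1, ε • q.1.2)) (by fun_prop)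
  fun_prop

lemma conj_wPhase (ε lam : ℝ) (A : Ed d → Ed d) (x y η : Ed d) :
    (starRingEnd ℂ) (wPhase ε lam A x y η) = wPhase ε lam A y x η := by
  unfold wPhase
  rw [map_mul, ← Complex.exp_conj, ← Complex.exp_conj, lineInt_symm A (ε • y) (ε • x),
    ← neg_sub y x, inner_neg_left]
  simp

/-- Momentum slice of a Schwartz function. -/
def slice (u : SchwartzMap (Ed d × Ed d) E) (w : Ed d) : SchwartzMap (Ed d) E :=
  SchwartzMap.compCLM ℝ (g := fun η : Ed d => (w, η))
    (by
      have : (fun η : Ed d => (w, η)) =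
          fun η => (w, (0 : Ed d)) + ContinuousLinearMap.inr ℝ (Ed d) (Ed d) η := by
        ext η <;> simp
      rw [this]
      fun_prop)
    ⟨1, 1, fun η => by
      have : ‖η‖ ≤ ‖(w, η)‖ := le_max_right _ _
      simp only [pow_one, one_mul]
      linarith⟩ u

lemma slice_apply (u : SchwartzMap (Ed d × Ed d) E) (w η : Ed d) : slice u w η = u (w, η) := rfl

lemma slice_integrable (u : SchwartzMap (Ed d × Ed d) E) (w : Ed d) :
    Integrable (fun η => u (w, η)) := (slice u w).integrable

lemma slice_bound (u : SchwartzMap (Ed d × Ed d) E) :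
    ∃ C : ℝ, ∀ w, ∫ η, ‖u (w, η)‖ ≤ C := by
  let k : ℕ := Module.finrank ℝ (Ed d) + 1
  let C0 : ℝ := 2 ^ k * (Finset.Iic ((k, 0) : ℕ × ℕ)).sup
    (fun m => SchwartzMap.seminorm ℝ m.1 m.2) u
  have hintg : Integrable (fun η : Ed d => (1 + ‖η‖) ^ (-(k : ℝ))) :=
    integrable_one_add_norm (by simp [k])
  refine ⟨∫ η : Ed d, C0 * (1 + ‖η‖) ^ (-(k : ℝ)), fun w => ?_⟩
  refine integral_mono (slice_integrable u w).norm (hintg.const_mul C0) fun η => ?_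
  have h := SchwartzMap.one_add_le_sup_seminorm_apply (𝕜 := ℝ) (m := (k, 0)) (k := k) (n := 0)
    le_rfl le_rfl u (w, η)
  rw [norm_iteratedFDeriv_zero] at h
  have h1 : ‖η‖ ≤ ‖(w, η)‖ := le_max_right _ _
  have h2 : (1 + ‖η‖) ^ k * ‖u (w, η)‖ ≤ C0 := by
    refine le_trans ?_ h
    gcongr
  have h3 : 0 < (1 + ‖η‖) ^ k := by positivity
  show ‖u (w, η)‖ ≤ C0 * (1 + ‖η‖) ^ (-(k : ℝ))
  rw [Real.rpow_neg (by positivity), Real.rpow_natCast, ← div_eq_mul_inv, le_div_iff₀ h3]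
  linarith

lemma wker_integrand_integrable (ε lam : ℝ) {A : Ed d → Ed d} (hA : Continuous A)
    (u : SchwartzMap (Ed d × Ed d) E) (x y : Ed d) :
    Integrable fun η : Ed d => wPhase ε lam A x y η • u ((ε / 2) • (x + y), η) := by
  refine (slice_integrable u ((ε / 2) • (x + y))).norm.mono' ?_ ?_
  · refine Continuous.aestronglyMeasurable ?_
    have h := (continuous_wPhase ε lam hA).comp
      (f := fun η : Ed d => ((x, y), η)) (by fun_prop)
    have hu := u.continuous
    exact h.smul (by fun_prop)
  · refine Filter.Eventually.of_forall fun η => ?_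
    rw [norm_smul, norm_wPhase, one_mul]

lemma wker_norm_le (ε lam : ℝ) (A : Ed d → Ed d)
    (u : SchwartzMap (Ed d × Ed d) E) (x y : Ed d) :
    ‖wker ε lam A u x y‖ ≤ ((2 * Real.pi) ^ d)⁻¹ * ∫ η, ‖u ((ε / 2) • (x + y), η)‖ := by
  unfold wker
  rw [norm_smul, Real.norm_of_nonneg (by positivity)]
  gcongr
  refine (norm_integral_le_integral_norm _).trans (le_of_eq ?_)
  simp only [norm_smul, norm_wPhase, one_mul]

lemma wker_bound (ε lam : ℝ) (A : Ed d → Ed d)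
    (u : SchwartzMap (Ed d × Ed d) E) :
    ∃ C : ℝ, ∀ x y, ‖wker ε lam A u x y‖ ≤ C := by
  obtain ⟨C, hC⟩ := slice_bound u
  refine ⟨((2 * Real.pi) ^ d)⁻¹ * C, fun x y => (wker_norm_le ε lam A u x y).trans ?_⟩
  gcongr
  exact hC _

lemma wker_stronglyMeasurable (ε lam : ℝ) {A : Ed d → Ed d} (hA : Continuous A)
    (u : SchwartzMap (Ed d × Ed d) E) :
    StronglyMeasurable fun p : Ed d × Ed d => wker ε lam A u p.1 p.2 := by
  unfold wker
  refine StronglyMeasurable.const_smul ?_ _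
  refine StronglyMeasurable.integral_prod_right' (f := fun q : (Ed d × Ed d) × Ed d =>
    wPhase ε lam A q.1.1 q.1.2 q.2 • u ((ε / 2) • (q.1.1 + q.1.2), q.2)) ?_
  refine Continuous.stronglyMeasurable ?_
  have hu := u.continuous
  exact (continuous_wPhase ε lam hA).smul (by fun_prop)

lemma wker_integrable {ε : ℝ} (hε : 0 < ε) (lam : ℝ) {A : Ed d → Ed d} (hA : Continuous A)
    (u : SchwartzMap (Ed d × Ed d) E) (x : Ed d) :
    Integrable fun y : Ed d => wker ε lam A u x y := by
  have h1 : Integrable fun w : Ed d => ∫ η, ‖u (w, η)‖ :=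
    Integrable.integral_prod_left (f := fun p => ‖u p‖) (u.integrable (μ := volume)).norm
  have h2 : Integrable fun y : Ed d => ∫ η, ‖u ((ε / 2) • (x + y), η)‖ :=
    ((h1.comp_smul (R := ε / 2) (by positivity)).comp_add_left x)
  refine (h2.const_mul ((2 * Real.pi) ^ d)⁻¹).mono' ?_ ?_
  · exact ((wker_stronglyMeasurable ε lam hA u).comp_measurable
      (g := fun y : Ed d => (x, y)) (by fun_prop)).aestronglyMeasurable
  · exact Filter.Eventually.of_forall fun y => wker_norm_le ε lam A u x y

lemma wker_clm {F : Type*} [NormedAddCommGroup F] [NormedSpace ℂ F] [CompleteSpace E]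
    [CompleteSpace F]
    (ε lam : ℝ) {A : Ed d → Ed d} (hA : Continuous A) (u : SchwartzMap (Ed d × Ed d) E)
    (L : E →L[ℂ] F) (x y : Ed d) :
    wker ε lam A (fun X => L (u X)) x y = L (wker ε lam A u x y) := by
  unfold wker
  rw [map_real_smul L L.continuous,
    ← L.integral_comp_comm (wker_integrand_integrable ε lam hA u x y)]
  simp

lemma wker_conj (ε lam : ℝ) (A : Ed d → Ed d) (φ : Ed d × Ed d → ℂ) (x y : Ed d) :
    wker ε lam A (fun X => (starRingEnd ℂ) (φ X)) x y =
      (starRingEnd ℂ) (wker ε lam A φ y x) := by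
  unfold wker
  rw [Complex.real_smul, Complex.real_smul, map_mul, Complex.conj_ofReal, ← integral_conj]
  congr 2
  ext η
  rw [smul_eq_mul, smul_eq_mul, map_mul, conj_wPhase, add_comm]

variable {H H' H'' : Type*}
    [NormedAddCommGroup H] [InnerProductSpace ℂ H] [CompleteSpace H]
    [NormedAddCommGroup H'] [InnerProductSpace ℂ H'] [CompleteSpace H']
    [NormedAddCommGroup H''] [InnerProductSpace ℂ H''] [CompleteSpace H'']

lemma opA_eq (ε lam : ℝ) {A : Ed d → Ed d} (hA : Continuous A)
    (u : SchwartzMap (Ed d × Ed d) (H →L[ℂ] H')) (Ψ : Ed d → H) (x : Ed d) :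
    opA ε lam A u Ψ x = ∫ y, wker ε lam A u x y (Ψ y) := by
  unfold opA wker
  rw [← integral_smul]
  congr 1
  ext y
  rw [smul_apply,
    ContinuousLinearMap.integral_apply (wker_integrand_integrable ε lam hA u x y)]
  rfl

lemma comp_kernel {ε : ℝ} (hε : 0 < ε) (lam : ℝ) {A : Ed d → Ed d} (hA : Continuous A)
    (f : SchwartzMap (Ed d × Ed d) (H' →L[ℂ] H''))
    (g : SchwartzMap (Ed d × Ed d) (H →L[ℂ] H'))
    (p : SchwartzMap (Ed d × Ed d) (H →L[ℂ] H''))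
    (hp : ∀ (Ψ : SchwartzMap (Ed d) H) (x : Ed d),
      opA ε lam A (⇑p) (⇑Ψ) x = opA ε lam A (⇑f) (opA ε lam A (⇑g) (⇑Ψ)) x)
    (v : H) (x : Ed d) :
    ∀ᵐ y : Ed d, (Integrable fun z => wker ε lam A f x z (wker ε lam A g z y v)) ∧
      wker ε lam A p x y v =
      ∫ z, wker ε lam A f x z (wker ε lam A g z y v) := by
  obtain ⟨Cg, hCg⟩ := wker_bound ε lam A g
  have hfi := wker_integrable hε lam hA f x
  have happ : Continuous fun q : (H' →L[ℂ] H'') × H' => q.1 q.2 :=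
    isBoundedBilinearMap_apply.continuous
  have happ' : Continuous fun T : H →L[ℂ] H' => T v := by fun_prop
  have hgv : StronglyMeasurable fun q : Ed d × Ed d => wker ε lam A g q.1 q.2 v :=
    happ'.comp_stronglyMeasurable (wker_stronglyMeasurable ε lam hA g)
  have hfx : StronglyMeasurable fun z : Ed d => wker ε lam A f x z :=
    (wker_stronglyMeasurable ε lam hA f).comp_measurable
      (g := fun y : Ed d => (x, y)) (by fun_prop)
  -- joint measurability of the integrand, in the order `(y, z)`
  have hJ : StronglyMeasurable fun q : Ed d × Ed d =>
      wker ε lam A f x q.2 (wker ε lam A g q.2 q.1 v) :=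
    happ.comp_stronglyMeasurable
      ((hfx.comp_measurable measurable_snd).prodMk (hgv.comp_measurable measurable_swap))
  have hL : StronglyMeasurable fun y : Ed d =>
      ∫ z, wker ε lam A f x z (wker ε lam A g z y v) :=
    StronglyMeasurable.integral_prod_right' hJ
  have hJb : ∀ y z, ‖wker ε lam A f x z (wker ε lam A g z y v)‖ ≤
      ‖wker ε lam A f x z‖ * (Cg * ‖v‖) := by
    intro y z
    refine (ContinuousLinearMap.le_opNorm _ _).trans ?_
    gcongr
    refine (ContinuousLinearMap.le_opNorm _ _).trans ?_
    gcongr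
    exact hCg _ _
  have hJint : ∀ y, Integrable fun z => wker ε lam A f x z (wker ε lam A g z y v) := by
    intro y
    refine (hfi.norm.mul_const (Cg * ‖v‖)).mono' ?_ (Filter.Eventually.of_forall (hJb y))
    exact (hJ.comp_measurable (g := fun z : Ed d => (y, z)) (by fun_prop)).aestronglyMeasurable
  have hLb : ∀ y, ‖∫ z, wker ε lam A f x z (wker ε lam A g z y v)‖ ≤
      ∫ z, ‖wker ε lam A f x z‖ * (Cg * ‖v‖) := fun y =>
    norm_integral_le_of_norm_le (hfi.norm.mul_const _) (Filter.Eventually.of_forall (hJb y))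
  have hLloc : LocallyIntegrable fun y : Ed d =>
      ∫ z, wker ε lam A f x z (wker ε lam A g z y v) := by
    refine (locallyIntegrable_const (∫ z, ‖wker ε lam A f x z‖ * (Cg * ‖v‖))).mono
      hL.aestronglyMeasurable (Filter.Eventually.of_forall fun y => ?_)
    exact (hLb y).trans (le_abs_self _)
  have hpi : Integrable fun y => wker ε lam A p x y v :=
    (wker_integrable hε lam hA p x).apply_continuousLinearMap v
  have key := ae_eq_zero_of_integral_contDiff_smul_eq_zero
    (hpi.locallyIntegrable.sub hLloc) (μ := volume) ?_
  · filter_upwards [key] with y hy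
    exact ⟨hJint y, sub_eq_zero.1 hy⟩
  intro φ hφ hφc
  let Ψ : SchwartzMap (Ed d) H := HasCompactSupport.toSchwartzMap (f := fun y => φ y • v)
    (hφc.smul_right) (hφ.smul contDiff_const)
  have hΨ : ∀ y, Ψ y = φ y • v := fun y => rfl
  have h := hp Ψ x
  rw [opA_eq ε lam hA, opA_eq ε lam hA] at h
  have hφint : Integrable φ := hφ.continuous.integrable_of_hasCompactSupport hφc
  have e1 : ∀ z, wker ε lam A f x z (opA ε lam A (⇑g) (⇑Ψ) z) =
      ∫ y, φ y • wker ε lam A f x z (wker ε lam A g z y v) := by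
    intro z
    rw [opA_eq ε lam hA, ← ContinuousLinearMap.integral_comp_comm]
    · congr 1
      ext y
      rw [hΨ, map_real_smul (wker ε lam A g z y) (ContinuousLinearMap.continuous _),
        map_real_smul (wker ε lam A f x z) (ContinuousLinearMap.continuous _)]
    · have hi : Integrable fun y => φ y • wker ε lam A g z y v := by
        refine (hφint.norm.mul_const (Cg * ‖v‖)).mono' ?_ (Filter.Eventually.of_forall fun y => ?_)
        · exact hφ.continuous.aestronglyMeasurable.smul
            (hgv.comp_measurable (g := fun y : Ed d => (z, y)) (by fun_prop)).aestronglyMeasurable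
        · rw [norm_smul]
          gcongr
          refine (ContinuousLinearMap.le_opNorm _ _).trans ?_
          gcongr
          exact hCg _ _
      refine hi.congr (Filter.Eventually.of_forall fun y => ?_)
      simp only
      rw [hΨ, map_real_smul (wker ε lam A g z y) (ContinuousLinearMap.continuous _)]
  have e2 : ∀ y, wker ε lam A p x y (Ψ y) = φ y • wker ε lam A p x y v := by
    intro y
    rw [hΨ, map_real_smul (wker ε lam A p x y) (ContinuousLinearMap.continuous _)]
  simp only [e1, e2] at h
  have hsw : ∫ z, ∫ y, φ y • wker ε lam A f x z (wker ε lam A g z y v) =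
      ∫ y, ∫ z, φ y • wker ε lam A f x z (wker ε lam A g z y v) := by
    refine integral_integral_swap ?_
    have hb : Integrable (fun q : Ed d × Ed d =>
        (‖wker ε lam A f x q.1‖ * (Cg * ‖v‖)) * ‖φ q.2‖) (volume.prod volume) :=
      (hfi.norm.mul_const (Cg * ‖v‖)).mul_prod hφint.norm
    refine hb.mono' ?_ (Filter.Eventually.of_forall fun q => ?_)
    · exact ((hφ.continuous.comp continuous_snd).aestronglyMeasurable.smul
        (hJ.comp_measurable measurable_swap).aestronglyMeasurable)
    · simp only [Function.uncurry]
      rw [norm_smul, mul_comm]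
      gcongr
      exact hJb _ _
  rw [hsw] at h
  simp only [integral_smul] at h
  simp only [Pi.sub_apply, smul_sub]
  rw [integral_sub, h, sub_self]
  · exact hpi.locallyIntegrable.integrable_smul_left_of_hasCompactSupport hφ.continuous hφc
  · exact hLloc.integrable_smul_left_of_hasCompactSupport hφ.continuous hφc

end KernelAnalysis

section Plancherel

open scoped ComplexConjugate FourierTransform

variable {d : ℕ}

/-- Partial Fourier transform in the momentum variable. -/
def pFour (φ : SchwartzMap (Ed d × Ed d) ℂ) (q : Ed d × Ed d) : ℂ := 𝓕 (slice φ q.1) q.2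

/-- The linear change of variables. -/
def chv (ε : ℝ) : (Ed d × Ed d) →ₗ[ℝ] (Ed d × Ed d) :=
  LinearMap.prod ((ε / 2) • (LinearMap.fst ℝ (Ed d) (Ed d) + LinearMap.snd ℝ (Ed d) (Ed d)))
    ((2 * Real.pi)⁻¹ • (LinearMap.snd ℝ (Ed d) (Ed d) - LinearMap.fst ℝ (Ed d) (Ed d)))

lemma chv_apply (ε : ℝ) (p : Ed d × Ed d) :
    chv ε p = ((ε / 2) • (p.1 + p.2), (2 * Real.pi)⁻¹ • (p.2 - p.1)) := rfl

lemma chv_injective {ε : ℝ} (hε : 0 < ε) : Function.Injective (chv (d := d) ε) := by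
  rw [← LinearMap.ker_eq_bot, LinearMap.ker_eq_bot']
  rintro ⟨x, y⟩ h
  rw [chv_apply, Prod.mk_eq_zero] at h
  have h1 : x + y = 0 := (smul_eq_zero.1 h.1).resolve_left (by positivity)
  have h2 : y - x = 0 := (smul_eq_zero.1 h.2).resolve_left (by positivity)
  have h3 : y = x := sub_eq_zero.1 h2
  subst h3
  have h4 : (2 : ℝ) • y = 0 := by rw [two_smul, h1]
  have h5 : y = 0 := (smul_eq_zero.1 h4).resolve_left (by norm_num)
  simp [h5]

lemma wker_eq_pFour (ε lam : ℝ) (A : Ed d → Ed d) (φ : SchwartzMap (Ed d × Ed d) ℂ)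
    (p : Ed d × Ed d) :
    wker ε lam A φ p.1 p.2 = ((((2 * Real.pi) ^ d)⁻¹ : ℝ) : ℂ) *
      (Complex.exp (-Complex.I * (((lam / ε) * lineInt A (ε • p.1) (ε • p.2) : ℝ) : ℂ)) *
        pFour φ (chv ε p)) := by
  unfold wker pFour
  rw [Complex.real_smul, SchwartzMap.fourier_coe, Real.fourier_eq']
  refine congrArg _ ?_
  rw [← integral_const_mul]
  refine integral_congr_ae (Filter.Eventually.of_forall fun η => ?_)
  dsimp only
  rw [chv_apply]
  simp only [slice_apply, wPhase, smul_eq_mul]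
  have : ((-2 * Real.pi * ⟪η, (2 * Real.pi)⁻¹ • (p.2 - p.1)⟫_ℝ : ℝ) : ℂ) * Complex.I =
      -Complex.I * ((⟪p.2 - p.1, η⟫_ℝ : ℝ) : ℂ) := by
    rw [inner_smul_right, real_inner_comm]
    have hpi : (Real.pi : ℂ) ≠ 0 := by exact_mod_cast Real.pi_ne_zero
    push_cast
    field_simp
  rw [this]
  ring

lemma pFour_stronglyMeasurable (φ : SchwartzMap (Ed d × Ed d) ℂ) :
    Measurable (pFour φ) := by
  have : pFour φ = fun q : Ed d × Ed d => ∫ η : Ed d,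
      Complex.exp (((-2 * Real.pi * ⟪η, q.2⟫_ℝ : ℝ) : ℂ) * Complex.I) • φ (q.1, η) := by
    ext q
    unfold pFour
    rw [SchwartzMap.fourier_coe, Real.fourier_eq']
    rfl
  rw [this]
  refine StronglyMeasurable.measurable ?_
  refine StronglyMeasurable.integral_prod_right' (f := fun q : (Ed d × Ed d) × Ed d =>
    Complex.exp (((-2 * Real.pi * ⟪q.2, q.1.2⟫_ℝ : ℝ) : ℂ) * Complex.I) • φ (q.1.1, q.2)) ?_
  refine Continuous.stronglyMeasurable ?_
  have hu := φ.continuous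
  fun_prop

lemma schwartz_lintegral_sq (f : SchwartzMap (Ed d) ℂ) :
    ∫⁻ x, ‖f x‖ₑ ^ 2 = ENNReal.ofReal (∫ x, ‖f x‖ ^ 2) := by
  rw [ofReal_integral_eq_lintegral_ofReal]
  · refine lintegral_congr fun x => ?_
    rw [ENNReal.ofReal_pow (norm_nonneg _), ofReal_norm]
  · exact (f.memLp 2).integrable_norm_pow (by norm_num)
  · exact Filter.Eventually.of_forall fun x => by positivity

lemma pFour_lintegral (φ : SchwartzMap (Ed d × Ed d) ℂ) :
    ∫⁻ q, ‖pFour φ q‖ₑ ^ 2 = ∫⁻ q, ‖φ q‖ₑ ^ 2 := by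
  have hm := pFour_stronglyMeasurable φ
  have hc := φ.continuous.measurable
  rw [Measure.volume_eq_prod, lintegral_prod _ (by fun_prop), lintegral_prod _ (by fun_prop)]
  refine lintegral_congr fun w => ?_
  have h1 := schwartz_lintegral_sq (𝓕 (slice φ w))
  have h2 := schwartz_lintegral_sq (slice φ w)
  rw [SchwartzMap.integral_norm_sq_fourier, ← h2] at h1
  exact h1

lemma schwartz_lintegral_lt_top (φ : SchwartzMap (Ed d × Ed d) ℂ) :
    ∫⁻ q, ‖φ q‖ₑ ^ 2 < ⊤ := by
  have := ((φ.memLp 2 (volume : Measure (Ed d × Ed d))).integrable_norm_pow (by norm_num)).2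
  rw [hasFiniteIntegral_iff_enorm] at this
  simpa using this

lemma integrable_conj_mul {α : Type*} [MeasurableSpace α] {μ : Measure α} {f g : α → ℂ}
    (hf : AEMeasurable f μ) (hg : AEMeasurable g μ) (hf2 : ∫⁻ q, ‖f q‖ₑ ^ 2 ∂μ < ⊤)
    (hg2 : ∫⁻ q, ‖g q‖ₑ ^ 2 ∂μ < ⊤) :
    Integrable (fun q => conj (f q) * g q) μ := by
  refine ⟨((Complex.continuous_conj.measurable.comp_aemeasurable hf).mul hg).aestronglyMeasurable,
    ?_⟩
  rw [hasFiniteIntegral_iff_enorm]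
  simp only [enorm_mul, RCLike.enorm_conj]
  have h := (cs_lintegral μ hf.enorm hg.enorm).trans_lt (ENNReal.mul_lt_top hf2 hg2)
  by_contra hcon
  rw [not_lt, top_le_iff] at hcon
  simp [hcon] at h

lemma pFour_integral (φ ψ : SchwartzMap (Ed d × Ed d) ℂ) :
    ∫ q, conj (pFour φ q) * pFour ψ q = ∫ q, conj (φ q) * ψ q := by
  have h1 : Integrable (fun q => conj (pFour φ q) * pFour ψ q) :=
    integrable_conj_mul (pFour_stronglyMeasurable φ).aemeasurable
      (pFour_stronglyMeasurable ψ).aemeasurable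
      (by rw [pFour_lintegral]; exact schwartz_lintegral_lt_top φ)
      (by rw [pFour_lintegral]; exact schwartz_lintegral_lt_top ψ)
  have h2 : Integrable (fun q => conj (φ q) * ψ q) :=
    integrable_conj_mul φ.continuous.measurable.aemeasurable
      ψ.continuous.measurable.aemeasurable
      (schwartz_lintegral_lt_top φ) (schwartz_lintegral_lt_top ψ)
  rw [Measure.volume_eq_prod] at h1 h2 ⊢
  rw [integral_prod _ h1, integral_prod _ h2]
  congr 1
  ext w
  have h := SchwartzMap.integral_inner_fourier_fourier (slice φ w) (slice ψ w)
  simp only [RCLike.inner_apply'] at h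
  exact h

lemma wker_plancherel {ε : ℝ} (hε : 0 < ε) (lam : ℝ) (A : Ed d → Ed d) :
    ∃ κ : ℝ, 0 < κ ∧
      (∀ φ : SchwartzMap (Ed d × Ed d) ℂ,
        ∫⁻ p : Ed d × Ed d, ‖wker ε lam A φ p.1 p.2‖ₑ ^ 2 =
          ENNReal.ofReal κ * ∫⁻ q, ‖φ q‖ₑ ^ 2) ∧
      (∀ φ ψ : SchwartzMap (Ed d × Ed d) ℂ,
        ∫ p : Ed d × Ed d, conj (wker ε lam A φ p.1 p.2) * wker ε lam A ψ p.1 p.2 =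
          (κ : ℂ) * ∫ q, conj (φ q) * ψ q) := by
  have hinj := chv_injective (d := d) hε
  have hdet : LinearMap.det (chv (d := d) ε) ≠ 0 := by
    have := LinearEquiv.isUnit_det' (LinearEquiv.ofInjectiveEndo (chv (d := d) ε) hinj)
    exact this.ne_zero
  have hmap := Measure.map_linearMap_addHaar_eq_smul_addHaar
    (volume : Measure (Ed d × Ed d)) hdet
  set D : ℝ := |(LinearMap.det (chv (d := d) ε))⁻¹| with hD
  have hDpos : 0 < D := abs_pos.2 (inv_ne_zero hdet)
  have hcont : Continuous (chv (d := d) ε) := LinearMap.continuous_of_finiteDimensional _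
  have hemb : MeasurableEmbedding (chv (d := d) ε) := hcont.measurableEmbedding hinj
  obtain ⟨c, hc⟩ : ∃ c : ℝ, c = ((2 * Real.pi) ^ d)⁻¹ := ⟨_, rfl⟩
  have hcpos : 0 < c := by rw [hc]; positivity
  refine ⟨c ^ 2 * D, by positivity, fun φ => ?_, fun φ ψ => ?_⟩
  · have e1 : ∀ p : Ed d × Ed d, ‖wker ε lam A φ p.1 p.2‖ₑ ^ 2 =
        ENNReal.ofReal (c ^ 2) * ‖pFour φ (chv ε p)‖ₑ ^ 2 := by
      intro p
      have hn : ‖wker ε lam A φ p.1 p.2‖ = c * ‖pFour φ (chv ε p)‖ := by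
        rw [wker_eq_pFour, ← hc, norm_mul, norm_mul, Complex.norm_exp, Complex.norm_real,
          Real.norm_of_nonneg hcpos.le]
        simp
      rw [← ofReal_norm, hn, ENNReal.ofReal_mul hcpos.le, mul_pow, ofReal_norm,
        ENNReal.ofReal_pow hcpos.le]
    simp only [e1]
    have hm := pFour_stronglyMeasurable φ
    rw [lintegral_const_mul _ (by fun_prop),
      ← hemb.lintegral_map (fun q => ‖pFour φ q‖ₑ ^ 2), hmap, lintegral_smul_measure,
      pFour_lintegral, ENNReal.ofReal_mul (by positivity), smul_eq_mul, mul_assoc]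
  · have e1 : ∀ p : Ed d × Ed d,
        conj (wker ε lam A φ p.1 p.2) * wker ε lam A ψ p.1 p.2 =
        ((c ^ 2 : ℝ) : ℂ) * (conj (pFour φ (chv ε p)) * pFour ψ (chv ε p)) := by
      intro p
      rw [wker_eq_pFour, wker_eq_pFour, ← hc]
      set θ := Complex.exp
        (-Complex.I * (((lam / ε) * lineInt A (ε • p.1) (ε • p.2) : ℝ) : ℂ)) with hθ
      have hθ1 : conj θ * θ = 1 := by
        rw [RCLike.conj_mul, hθ, Complex.norm_exp]
        simp
      rw [map_mul, map_mul, Complex.conj_ofReal]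
      push_cast
      linear_combination ((c : ℂ) ^ 2 * conj (pFour φ (chv ε p)) * pFour ψ (chv ε p)) * hθ1
    simp only [e1]
    rw [integral_const_mul, ← hemb.integral_map (fun q => conj (pFour φ q) * pFour ψ q), hmap,
      integral_smul_measure, pFour_integral, ENNReal.toReal_ofReal hDpos.le, Complex.real_smul]
    push_cast
    ring

end Plancherel

section PartD

open scoped ComplexConjugate

variable {d : ℕ} {ι κ θ : Type*}
  [MeasurableSpace ι] [DiscreteMeasurableSpace ι] [Countable ι]
  [MeasurableSpace κ] [DiscreteMeasurableSpace κ] [Countable κ]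
  [MeasurableSpace θ] [DiscreteMeasurableSpace θ] [Countable θ]
  {H H' H'' : Type*}
  [NormedAddCommGroup H] [InnerProductSpace ℂ H] [CompleteSpace H]
  [NormedAddCommGroup H'] [InnerProductSpace ℂ H'] [CompleteSpace H']
  [NormedAddCommGroup H''] [InnerProductSpace ℂ H''] [CompleteSpace H'']

lemma partD_start : True := trivial

/-- The functional taking a matrix element. -/
def melt (b : HilbertBasis ι ℂ H) (b' : HilbertBasis κ ℂ H') (j : κ) (i : ι) :
    (H →L[ℂ] H') →L[ℂ] ℂ :=
  (innerSL ℂ (b' j)).comp (ContinuousLinearMap.apply ℂ H' (b i))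

lemma partD_melt : True := trivial

/-- Matrix elements of an operator valued Schwartz function. -/
def mfun (b : HilbertBasis ι ℂ H) (b' : HilbertBasis κ ℂ H')
    (u : SchwartzMap (Ed d × Ed d) (H →L[ℂ] H')) (j : κ) (i : ι) :
    SchwartzMap (Ed d × Ed d) ℂ :=
  SchwartzMap.postcompCLM (melt b b' j i) u

lemma mfun_apply (b : HilbertBasis ι ℂ H) (b' : HilbertBasis κ ℂ H')
    (u : SchwartzMap (Ed d × Ed d) (H →L[ℂ] H')) (j : κ) (i : ι) (X : Ed d × Ed d) :
    mfun b b' u j i X = ⟪b' j, u X (b i)⟫_ℂ := rfl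

/-- Matrix of kernels. -/
def mker (ε lam : ℝ) (A : Ed d → Ed d) (b : HilbertBasis ι ℂ H) (b' : HilbertBasis κ ℂ H')
    (u : SchwartzMap (Ed d × Ed d) (H →L[ℂ] H')) (q : (Ed d × κ) × (Ed d × ι)) : ℂ :=
  wker ε lam A (mfun b b' u q.1.2 q.2.2) q.1.1 q.2.1

lemma mker_eq (ε lam : ℝ) {A : Ed d → Ed d} (hA : Continuous A)
    (b : HilbertBasis ι ℂ H) (b' : HilbertBasis κ ℂ H')
    (u : SchwartzMap (Ed d × Ed d) (H →L[ℂ] H')) (x y : Ed d) (j : κ) (i : ι) :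
    mker ε lam A b b' u ((x, j), (y, i)) = ⟪b' j, wker ε lam A u x y (b i)⟫_ℂ :=
  wker_clm ε lam hA u (melt b b' j i) x y

lemma mker_measurable_aux (ε lam : ℝ) {A : Ed d → Ed d} (hA : Continuous A)
    (b : HilbertBasis ι ℂ H) (b' : HilbertBasis κ ℂ H')
    (u : SchwartzMap (Ed d × Ed d) (H →L[ℂ] H')) :
    Measurable fun q : (Ed d × Ed d) × (κ × ι) =>
      wker ε lam A (mfun b b' u q.2.1 q.2.2) q.1.1 q.1.2 :=
  measurable_from_prod_countable_left fun ji =>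
    (wker_stronglyMeasurable ε lam hA (mfun b b' u ji.1 ji.2)).measurable

lemma mker_measurable (ε lam : ℝ) {A : Ed d → Ed d} (hA : Continuous A)
    (b : HilbertBasis ι ℂ H) (b' : HilbertBasis κ ℂ H')
    (u : SchwartzMap (Ed d × Ed d) (H →L[ℂ] H')) :
    Measurable (mker ε lam A b b' u) :=
  (mker_measurable_aux ε lam hA b b' u).comp
    (g := fun q : (Ed d × Ed d) × (κ × ι) =>
      wker ε lam A (mfun b b' u q.2.1 q.2.2) q.1.1 q.1.2)
    (f := fun q : (Ed d × κ) × (Ed d × ι) => ((q.1.1, q.2.1), (q.1.2, q.2.2))) (by fun_prop)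

lemma mfun_measurable (b : HilbertBasis ι ℂ H) (b' : HilbertBasis κ ℂ H')
    (u : SchwartzMap (Ed d × Ed d) (H →L[ℂ] H')) :
    Measurable fun q : (Ed d × Ed d) × (κ × ι) => mfun b b' u q.2.1 q.2.2 q.1 :=
  measurable_from_prod_countable_left fun ji => (mfun b b' u ji.1 ji.2).continuous.measurable

lemma mker_lintegral {ε : ℝ} (lam : ℝ) {A : Ed d → Ed d} (hA : Continuous A)
    {κ0 : ℝ}
    (hpl : ∀ φ : SchwartzMap (Ed d × Ed d) ℂ,
        ∫⁻ p : Ed d × Ed d, ‖wker ε lam A φ p.1 p.2‖ₑ ^ 2 =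
          ENNReal.ofReal κ0 * ∫⁻ q, ‖φ q‖ₑ ^ 2)
    (b : HilbertBasis ι ℂ H) (b' : HilbertBasis κ ℂ H')
    (u : SchwartzMap (Ed d × Ed d) (H →L[ℂ] H')) :
    ∫⁻ q, ‖mker ε lam A b b' u q‖ₑ ^ 2
        ∂((volume.prod Measure.count).prod (volume.prod Measure.count)) =
      ENNReal.ofReal κ0 * ∫⁻ q : (Ed d × Ed d) × (κ × ι), ‖mfun b b' u q.2.1 q.2.2 q.1‖ₑ ^ 2
        ∂((volume : Measure (Ed d × Ed d)).prod (Measure.count.prod Measure.count)) := by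
  have h1 := mker_measurable_aux ε lam hA b b' u
  have h2 := mfun_measurable b b' u
  have h := (measurePreserving_four (volume : Measure (Ed d)) (Measure.count : Measure κ)
    (volume : Measure (Ed d)) (Measure.count : Measure ι)).lintegral_comp
    (f := fun q : (Ed d × Ed d) × (κ × ι) =>
      ‖wker ε lam A (mfun b b' u q.2.1 q.2.2) q.1.1 q.1.2‖ₑ ^ 2) (by fun_prop)
  refine h.trans ?_
  have a1 := lintegral_prod_symm (μ := (volume : Measure (Ed d × Ed d)))
    (ν := (Measure.count : Measure κ).prod (Measure.count : Measure ι)) _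
    (h1.enorm.pow_const 2).aemeasurable
  have a2 := lintegral_prod_symm (μ := (volume : Measure (Ed d × Ed d)))
    (ν := (Measure.count : Measure κ).prod (Measure.count : Measure ι)) _
    (h2.enorm.pow_const 2).aemeasurable
  rw [← Measure.volume_eq_prod]
  refine a1.trans ?_
  rw [a2]
  refine Eq.trans ?_ (lintegral_const_mul' _ _ ENNReal.ofReal_ne_top)
  exact lintegral_congr fun ji => hpl (mfun b b' u ji.1 ji.2)

/-- The `L²` property of the matrix kernel. -/
def KL2 (ε lam : ℝ) (A : Ed d → Ed d) (b : HilbertBasis ι ℂ H) (b' : HilbertBasis κ ℂ H')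
    (u : SchwartzMap (Ed d × Ed d) (H →L[ℂ] H')) : Prop :=
  ∫⁻ q, ‖mker ε lam A b b' u q‖ₑ ^ 2
        ∂((volume.prod Measure.count).prod (volume.prod Measure.count)) < ⊤

lemma tr_of_integrable (b : HilbertBasis ι ℂ H) (b' : HilbertBasis κ ℂ H')
    (S T : H →L[ℂ] H')
    (hX : Integrable (fun q : κ × ι => conj ⟪b' q.1, S (b q.2)⟫_ℂ * ⟪b' q.1, T (b q.2)⟫_ℂ)
      (Measure.count.prod Measure.count)) :
    ∫ q : κ × ι, conj ⟪b' q.1, S (b q.2)⟫_ℂ * ⟪b' q.1, T (b q.2)⟫_ℂ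
      ∂(Measure.count.prod Measure.count) =
    ∑' i, ⟪b i, ((ContinuousLinearMap.adjoint S).comp T) (b i)⟫_ℂ := by
  rw [integral_prod_symm _ hX, integral_countable hX.integral_prod_right]
  refine tsum_congr fun i => ?_
  have h2 : Integrable (fun j : κ => conj ⟪b' j, S (b i)⟫_ℂ * ⟪b' j, T (b i)⟫_ℂ)
      Measure.count := by
    have h3 := hX.prod_left_ae
    rw [Measure.ae_count_iff] at h3
    exact h3 i
  simp only
  rw [integral_countable h2]
  simp only [measureReal_def, Measure.count_singleton, ENNReal.toReal_one, one_smul]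
  rw [ContinuousLinearMap.comp_apply, ContinuousLinearMap.adjoint_inner_right,
    ← b'.tsum_inner_mul_inner]
  refine tsum_congr fun j => ?_
  rw [inner_conj_symm]

lemma mker_pair {ε : ℝ} (lam : ℝ) {A : Ed d → Ed d} (hA : Continuous A)
    {κ0 : ℝ} (hκ : 0 < κ0)
    (hpl : ∀ φ : SchwartzMap (Ed d × Ed d) ℂ,
        ∫⁻ p : Ed d × Ed d, ‖wker ε lam A φ p.1 p.2‖ₑ ^ 2 =
          ENNReal.ofReal κ0 * ∫⁻ q, ‖φ q‖ₑ ^ 2)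
    (hpi : ∀ φ ψ : SchwartzMap (Ed d × Ed d) ℂ,
        ∫ p : Ed d × Ed d, conj (wker ε lam A φ p.1 p.2) * wker ε lam A ψ p.1 p.2 =
          (κ0 : ℂ) * ∫ q, conj (φ q) * ψ q)
    (b : HilbertBasis ι ℂ H) (b' : HilbertBasis κ ℂ H')
    (u v : SchwartzMap (Ed d × Ed d) (H →L[ℂ] H'))
    (hu : KL2 ε lam A b b' u) (hv : KL2 ε lam A b b' v) :
    ∫ q, conj (mker ε lam A b b' u q) * mker ε lam A b b' v q
        ∂((volume.prod Measure.count).prod (volume.prod Measure.count)) =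
      (κ0 : ℂ) * ∫ X : Ed d × Ed d,
        ∑' i, ⟪b i, ((ContinuousLinearMap.adjoint (u X)).comp (v X)) (b i)⟫_ℂ := by
  have hu1 := mker_measurable_aux ε lam hA b b' u
  have hv1 := mker_measurable_aux ε lam hA b b' v
  have hu2 := mfun_measurable b b' u
  have hv2 := mfun_measurable b b' v
  have hS : ∀ w : SchwartzMap (Ed d × Ed d) (H →L[ℂ] H'), KL2 ε lam A b b' w →
      ∫⁻ q : (Ed d × Ed d) × (κ × ι), ‖mfun b b' w q.2.1 q.2.2 q.1‖ₑ ^ 2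
        ∂((volume : Measure (Ed d × Ed d)).prod (Measure.count.prod Measure.count)) < ⊤ := by
    intro w hw
    unfold KL2 at hw
    rw [mker_lintegral lam hA hpl] at hw
    by_contra hcon
    rw [not_lt, top_le_iff] at hcon
    rw [hcon, ENNReal.mul_top (by simpa using hκ)] at hw
    exact lt_irrefl _ hw
  have hI2 := integrable_conj_mul hu2.aemeasurable hv2.aemeasurable (hS u hu) (hS v hv)
  have four := measurePreserving_four (volume : Measure (Ed d)) (Measure.count : Measure κ)
    (volume : Measure (Ed d)) (Measure.count : Measure ι)
  have hI1 : Integrable (fun q : (Ed d × Ed d) × (κ × ι) =>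
      conj (wker ε lam A (mfun b b' u q.2.1 q.2.2) q.1.1 q.1.2) *
        wker ε lam A (mfun b b' v q.2.1 q.2.2) q.1.1 q.1.2)
      ((volume.prod volume).prod (Measure.count.prod Measure.count)) := by
    refine integrable_conj_mul hu1.aemeasurable hv1.aemeasurable ?_ ?_
    · rw [← four.lintegral_comp (f := fun q : (Ed d × Ed d) × (κ × ι) =>
        ‖wker ε lam A (mfun b b' u q.2.1 q.2.2) q.1.1 q.1.2‖ₑ ^ 2) (by fun_prop)]
      exact hu
    · rw [← four.lintegral_comp (f := fun q : (Ed d × Ed d) × (κ × ι) =>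
        ‖wker ε lam A (mfun b b' v q.2.1 q.2.2) q.1.1 q.1.2‖ₑ ^ 2) (by fun_prop)]
      exact hv
  have e1 : ∫ q, conj (mker ε lam A b b' u q) * mker ε lam A b b' v q
        ∂((volume.prod Measure.count).prod (volume.prod Measure.count)) =
      ∫ q : (Ed d × Ed d) × (κ × ι),
        conj (wker ε lam A (mfun b b' u q.2.1 q.2.2) q.1.1 q.1.2) *
          wker ε lam A (mfun b b' v q.2.1 q.2.2) q.1.1 q.1.2
        ∂((volume.prod volume).prod (Measure.count.prod Measure.count)) := by
    rw [← four.map_eq, integral_map four.aemeasurable]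
    · rfl
    · rw [four.map_eq]; exact hI1.aestronglyMeasurable
  rw [← Measure.volume_eq_prod] at hI1 e1
  rw [e1]
  clear e1 four
  rw [integral_prod_symm _ hI1]
  refine Eq.trans (b := ∫ ji : κ × ι, (κ0 : ℂ) * (∫ q, conj (mfun b b' u ji.1 ji.2 q) *
    mfun b b' v ji.1 ji.2 q) ∂(Measure.count.prod Measure.count)) ?_ ?_
  · exact integral_congr_ae (Filter.Eventually.of_forall fun ji =>
      hpi (mfun b b' u ji.1 ji.2) (mfun b b' v ji.1 ji.2))
  rw [integral_const_mul]
  congr 1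
  refine (integral_prod_symm _ hI2).symm.trans ?_
  rw [integral_prod _ hI2]
  refine integral_congr_ae ?_
  filter_upwards [hI2.prod_right_ae] with X hX
  exact tr_of_integrable b b' (u X) (v X) hX

end PartD

section PartD2

open scoped ComplexConjugate

variable {d : ℕ} {ι κ θ : Type*}
  [MeasurableSpace ι] [DiscreteMeasurableSpace ι] [Countable ι]
  [MeasurableSpace κ] [DiscreteMeasurableSpace κ] [Countable κ]
  [MeasurableSpace θ] [DiscreteMeasurableSpace θ] [Countable θ]
  {H H' H'' : Type*}
  [NormedAddCommGroup H] [InnerProductSpace ℂ H] [CompleteSpace H]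
  [NormedAddCommGroup H'] [InnerProductSpace ℂ H'] [CompleteSpace H']
  [NormedAddCommGroup H''] [InnerProductSpace ℂ H''] [CompleteSpace H'']

lemma ae_prod_count {α : Type*} [MeasurableSpace α] (μ : Measure α) [SigmaFinite μ]
    {P : α → ι → Prop} (h : ∀ i, ∀ᵐ y ∂μ, P y i) :
    ∀ᵐ q ∂(μ.prod (Measure.count : Measure ι)), P q.1 q.2 := by
  have h1 : ∀ᵐ y ∂μ, ∀ i, P y i := ae_all_iff.2 h
  filter_upwards [Measure.quasiMeasurePreserving_fst.ae h1] with q hq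
  exact hq q.2

lemma comp_pointwise (b' : HilbertBasis κ ℂ H') (v : H'')
    (T : Ed d → (H' →L[ℂ] H'')) (w : Ed d → H')
    (hI : Integrable (fun c : Ed d × κ => ⟪v, T c.1 (b' c.2)⟫_ℂ * ⟪b' c.2, w c.1⟫_ℂ)
      (volume.prod Measure.count))
    (hT : Integrable fun z => T z (w z)) :
    ⟪v, ∫ z, T z (w z)⟫_ℂ =
      ∫ c : Ed d × κ, ⟪v, T c.1 (b' c.2)⟫_ℂ * ⟪b' c.2, w c.1⟫_ℂ
        ∂(volume.prod Measure.count) := by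
  rw [← integral_inner hT, integral_prod _ hI]
  refine integral_congr_ae ?_
  filter_upwards [hI.prod_right_ae] with z hz
  rw [integral_countable hz]
  simp only [measureReal_def, Measure.count_singleton, ENNReal.toReal_one, one_smul]
  rw [← ContinuousLinearMap.adjoint_inner_left, ← b'.tsum_inner_mul_inner]
  refine tsum_congr fun k => ?_
  rw [ContinuousLinearMap.adjoint_inner_left]

lemma mker_comp {ε : ℝ} (hε : 0 < ε) (lam : ℝ) {A : Ed d → Ed d} (hA : Continuous A)
    (b : HilbertBasis ι ℂ H) (b' : HilbertBasis κ ℂ H') (b'' : HilbertBasis θ ℂ H'')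
    (f : SchwartzMap (Ed d × Ed d) (H' →L[ℂ] H''))
    (g : SchwartzMap (Ed d × Ed d) (H →L[ℂ] H'))
    (p : SchwartzMap (Ed d × Ed d) (H →L[ℂ] H''))
    (hp : ∀ (Ψ : SchwartzMap (Ed d) H) (x : Ed d),
      opA ε lam A (⇑p) (⇑Ψ) x = opA ε lam A (⇑f) (opA ε lam A (⇑g) (⇑Ψ)) x)
    (hf : KL2 ε lam A b' b'' f) (hg : KL2 ε lam A b b' g) :
    ∀ᵐ q ∂((volume.prod Measure.count).prod (volume.prod Measure.count)),
      mker ε lam A b b'' p q =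
        ∫ c, mker ε lam A b' b'' f (q.1, c) * mker ε lam A b b' g (c, q.2)
          ∂(volume.prod Measure.count) := by
  have hfm := mker_measurable ε lam hA b' b'' f
  have hgm := mker_measurable ε lam hA b b' g
  have hpm := mker_measurable ε lam hA b b'' p
  have hI := Measure.ae_ae_of_ae_prod (kernel_ae_integrable (volume.prod Measure.count)
    (volume.prod Measure.count) (volume.prod Measure.count) hfm hgm hf hg)
  have hm : StronglyMeasurable fun q : (Ed d × θ) × (Ed d × ι) =>
      ∫ c, mker ε lam A b' b'' f (q.1, c) * mker ε lam A b b' g (c, q.2)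
          ∂((volume : Measure (Ed d)).prod (Measure.count : Measure κ)) :=
    StronglyMeasurable.integral_prod_right'
      (f := fun r : ((Ed d × θ) × (Ed d × ι)) × (Ed d × κ) =>
        mker ε lam A b' b'' f (r.1.1, r.2) * mker ε lam A b b' g (r.2, r.1.2))
      (Measurable.stronglyMeasurable (by fun_prop))
  rw [Measure.ae_prod_iff_ae_ae (measurableSet_eq_fun hpm hm.measurable)]
  filter_upwards [hI] with xj hxj
  obtain ⟨x, j⟩ := xj
  have hC := ae_prod_count (ι := ι) (volume : Measure (Ed d))
    (fun i => comp_kernel hε lam hA f g p hp (b i) x)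
  filter_upwards [hxj, hC] with yi h1 h2
  obtain ⟨y, i⟩ := yi
  simp only at h1 h2 ⊢
  rw [mker_eq ε lam hA, h2.2]
  have e : ∀ c : Ed d × κ, mker ε lam A b' b'' f ((x, j), c) * mker ε lam A b b' g (c, (y, i)) =
      ⟪b'' j, wker ε lam A f x c.1 (b' c.2)⟫_ℂ * ⟪b' c.2, wker ε lam A g c.1 y (b i)⟫_ℂ := by
    rintro ⟨z, k⟩
    rw [mker_eq ε lam hA, mker_eq ε lam hA]
  simp only [e] at h1 ⊢
  exact comp_pointwise b' (b'' j) (fun z => wker ε lam A f x z)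
    (fun z => wker ε lam A g z y (b i)) h1 h2.1

lemma KL2_comp {ε : ℝ} (hε : 0 < ε) (lam : ℝ) {A : Ed d → Ed d} (hA : Continuous A)
    (b : HilbertBasis ι ℂ H) (b' : HilbertBasis κ ℂ H') (b'' : HilbertBasis θ ℂ H'')
    (f : SchwartzMap (Ed d × Ed d) (H' →L[ℂ] H''))
    (g : SchwartzMap (Ed d × Ed d) (H →L[ℂ] H'))
    (p : SchwartzMap (Ed d × Ed d) (H →L[ℂ] H''))
    (hp : ∀ (Ψ : SchwartzMap (Ed d) H) (x : Ed d),
      opA ε lam A (⇑p) (⇑Ψ) x = opA ε lam A (⇑f) (opA ε lam A (⇑g) (⇑Ψ)) x)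
    (hf : KL2 ε lam A b' b'' f) (hg : KL2 ε lam A b b' g) :
    KL2 ε lam A b b'' p := by
  have hfm := mker_measurable ε lam hA b' b'' f
  have hgm := mker_measurable ε lam hA b b' g
  unfold KL2
  refine lt_of_eq_of_lt (lintegral_congr_ae ?_) (kernel_comp_l2 (volume.prod Measure.count)
    (volume.prod Measure.count) (volume.prod Measure.count) hfm hgm hf hg)
  filter_upwards [mker_comp hε lam hA b b' b'' f g p hp hf hg] with q hq
  rw [hq]

/-- The adjoint as a real continuous linear map. -/
def adjR : (H →L[ℂ] H') →L[ℝ] (H' →L[ℂ] H) :=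
  LinearMap.mkContinuous
    { toFun := fun T => ContinuousLinearMap.adjoint T
      map_add' := fun S T => map_add _ S T
      map_smul' := fun c T => by
        have := (ContinuousLinearMap.adjoint (𝕜 := ℂ) (E := H) (F := H')).map_smulₛₗ (c : ℂ) T
        simpa using this } 1
    (fun T => by simp)

/-- The pointwise adjoint of a Schwartz function. -/
def adjS (u : SchwartzMap (Ed d × Ed d) (H →L[ℂ] H')) :
    SchwartzMap (Ed d × Ed d) (H' →L[ℂ] H) :=
  SchwartzMap.postcompCLM adjR u

lemma adjS_coe (u : SchwartzMap (Ed d × Ed d) (H →L[ℂ] H')) :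
    ⇑(adjS u) = fun X => ContinuousLinearMap.adjoint (u X) := rfl

lemma mker_adjS (ε lam : ℝ) (A : Ed d → Ed d)
    (b : HilbertBasis ι ℂ H) (b' : HilbertBasis κ ℂ H')
    (u : SchwartzMap (Ed d × Ed d) (H →L[ℂ] H')) (q : (Ed d × ι) × (Ed d × κ)) :
    mker ε lam A b' b (adjS u) q = conj (mker ε lam A b b' u (q.2, q.1)) := by
  unfold mker
  rw [← wker_conj]
  congr 1
  ext X
  rw [mfun_apply, mfun_apply, adjS_coe, ContinuousLinearMap.adjoint_inner_right, inner_conj_symm]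

lemma KL2_adjS {ε lam : ℝ} {A : Ed d → Ed d} (hA : Continuous A)
    (b : HilbertBasis ι ℂ H) (b' : HilbertBasis κ ℂ H')
    (u : SchwartzMap (Ed d × Ed d) (H →L[ℂ] H')) (hu : KL2 ε lam A b b' u) :
    KL2 ε lam A b' b (adjS u) := by
  have hum := mker_measurable ε lam hA b b' u
  unfold KL2 at hu ⊢
  rw [← lintegral_prod_swap] at hu
  refine lt_of_eq_of_lt (lintegral_congr fun q => ?_) hu
  rw [mker_adjS, RCLike.enorm_conj]
  rfl

lemma KL2_of_TC {ε : ℝ} (hε : 0 < ε) (lam : ℝ) {A : Ed d → Ed d} (hA : Continuous A)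
    (b : HilbertBasis ι ℂ H) (b' : HilbertBasis κ ℂ H')
    (u : SchwartzMap (Ed d × Ed d) (H →L[ℂ] H')) (hu : TCSchwartz u) :
    KL2 ε lam A b b' u := by
  obtain ⟨κ0, hκ, hpl, -⟩ := wker_plancherel hε lam A
  unfold KL2
  rw [mker_lintegral lam hA hpl]
  refine ENNReal.mul_lt_top ENNReal.ofReal_lt_top ?_
  have hm := mfun_measurable b b' u
  rw [lintegral_prod _ (hm.enorm.pow_const 2).aemeasurable]
  have h1 : ∀ X : Ed d × Ed d, ∫⁻ ji : κ × ι, ‖mfun b b' u ji.1 ji.2 X‖ₑ ^ 2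
      ∂(Measure.count.prod Measure.count) ≤ traceNormE (u X) ^ 2 := by
    intro X
    rw [lintegral_prod_symm _ (Measurable.of_discrete.aemeasurable), lintegral_count]
    refine le_trans (le_of_eq ?_) (tsum_hs_le (u X) b)
    refine tsum_congr fun i => ?_
    rw [lintegral_count]
    exact parseval_enorm b' (u X (b i))
  obtain ⟨C, hC⟩ := hu.2 (Module.finrank ℝ (Ed d × Ed d) + 1) [] []
  set k := Module.finrank ℝ (Ed d × Ed d) + 1 with hk
  have hintg : Integrable (fun X : Ed d × Ed d => (1 + ‖X‖) ^ (-(k : ℝ))) :=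
    integrable_one_add_norm (by simp [hk])
  have h2 : ∀ X : Ed d × Ed d, traceNormE (u X) ^ 2 ≤
      ENNReal.ofReal C ^ 2 * ‖(1 + ‖X‖) ^ (-(k : ℝ))‖ₑ := by
    intro X
    have h3 : ENNReal.ofReal ((1 + ‖X‖) ^ k) * traceNormE (u X) ≤ ENNReal.ofReal C := hC X
    have hpos : (0 : ℝ) < (1 + ‖X‖) ^ k := by positivity
    have hone : (1 : ℝ) ≤ (1 + ‖X‖) ^ k := one_le_pow₀ (by linarith [norm_nonneg X])
    have hone' : (1 : ℝ≥0∞) ≤ ENNReal.ofReal ((1 + ‖X‖) ^ k) := by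
      rw [← ENNReal.ofReal_one]; exact ENNReal.ofReal_le_ofReal hone
    have e : ‖(1 + ‖X‖) ^ (-(k : ℝ))‖ₑ = (ENNReal.ofReal ((1 + ‖X‖) ^ k))⁻¹ := by
      rw [Real.rpow_neg (by positivity), Real.rpow_natCast,
        Real.enorm_of_nonneg (by positivity), ENNReal.ofReal_inv_of_pos hpos]
    rw [e, ← div_eq_mul_inv, ENNReal.le_div_iff_mul_le (Or.inl (by simpa using hpos))
      (Or.inl ENNReal.ofReal_ne_top)]
    calc traceNormE (u X) ^ 2 * ENNReal.ofReal ((1 + ‖X‖) ^ k)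
        ≤ traceNormE (u X) ^ 2 * ENNReal.ofReal ((1 + ‖X‖) ^ k) ^ 2 := by
          gcongr
          exact le_self_pow₀ hone' (by norm_num)
      _ = (ENNReal.ofReal ((1 + ‖X‖) ^ k) * traceNormE (u X)) ^ 2 := by ring
      _ ≤ ENNReal.ofReal C ^ 2 := by gcongr
  refine lt_of_le_of_lt (lintegral_mono fun X => (h1 X).trans (h2 X)) ?_
  rw [lintegral_const_mul' _ _ (by simp)]
  exact ENNReal.mul_lt_top (by simp) hintg.2

end PartD2

section PartD3

open scoped ComplexConjugate

/-- The pairing computed in a given basis. -/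
def bPair {d : ℕ} {ι H H' : Type*}
    [NormedAddCommGroup H] [InnerProductSpace ℂ H] [CompleteSpace H]
    [NormedAddCommGroup H'] [InnerProductSpace ℂ H'] [CompleteSpace H']
    (b : HilbertBasis ι ℂ H) (u v : Ed d × Ed d → (H →L[ℂ] H')) : ℂ :=
  ∫ X : Ed d × Ed d, ∑' i, ⟪b i, ((ContinuousLinearMap.adjoint (u X)).comp (v X)) (b i)⟫_ℂ

theorem pairing_identities {d : ℕ} {ε : ℝ} (hε : 0 < ε) (lam : ℝ) {ι κ θ : Type*}
    [MeasurableSpace ι] [DiscreteMeasurableSpace ι] [Countable ι]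
    [MeasurableSpace κ] [DiscreteMeasurableSpace κ] [Countable κ]
    [MeasurableSpace θ] [DiscreteMeasurableSpace θ] [Countable θ]
    {H H' H'' : Type*}
    [NormedAddCommGroup H] [InnerProductSpace ℂ H] [CompleteSpace H]
    [NormedAddCommGroup H'] [InnerProductSpace ℂ H'] [CompleteSpace H']
    [NormedAddCommGroup H''] [InnerProductSpace ℂ H''] [CompleteSpace H'']
    (b : HilbertBasis ι ℂ H) (b' : HilbertBasis κ ℂ H') (b'' : HilbertBasis θ ℂ H'')
    {A : Ed d → Ed d} (hA : Continuous A)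
    (f : SchwartzMap (Ed d × Ed d) (H' →L[ℂ] H''))
    (g : SchwartzMap (Ed d × Ed d) (H →L[ℂ] H'))
    (h : SchwartzMap (Ed d × Ed d) (H →L[ℂ] H''))
    (hf : TCSchwartz f) (hg : TCSchwartz g) (hh : TCSchwartz h)
    (p₁ : SchwartzMap (Ed d × Ed d) (H →L[ℂ] H''))
    (hp₁ : ∀ (Ψ : SchwartzMap (Ed d) H) (x : Ed d),
      opA ε lam A (⇑p₁) (⇑Ψ) x = opA ε lam A (⇑f) (opA ε lam A (⇑g) (⇑Ψ)) x)
    (p₂ : SchwartzMap (Ed d × Ed d) (H' →L[ℂ] H''))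
    (hp₂ : ∀ (Φ : SchwartzMap (Ed d) H') (x : Ed d),
      opA ε lam A (⇑p₂) (⇑Φ) x =
        opA ε lam A (⇑h) (opA ε lam A (fun X => ContinuousLinearMap.adjoint (g X)) (⇑Φ)) x)
    (p₃ : SchwartzMap (Ed d × Ed d) (H'' →L[ℂ] H'))
    (hp₃ : ∀ (Ξ : SchwartzMap (Ed d) H'') (x : Ed d),
      opA ε lam A (⇑p₃) (⇑Ξ) x =
        opA ε lam A (⇑g) (opA ε lam A (fun X => ContinuousLinearMap.adjoint (h X)) (⇑Ξ)) x)
    (p₄ : SchwartzMap (Ed d × Ed d) (H →L[ℂ] H'))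
    (hp₄ : ∀ (Ψ : SchwartzMap (Ed d) H) (x : Ed d),
      opA ε lam A (⇑p₄) (⇑Ψ) x =
        opA ε lam A (fun X => ContinuousLinearMap.adjoint (f X)) (opA ε lam A (⇑h) (⇑Ψ)) x)
    (p₅ : SchwartzMap (Ed d × Ed d) (H' →L[ℂ] H))
    (hp₅ : ∀ (Φ : SchwartzMap (Ed d) H') (x : Ed d),
      opA ε lam A (⇑p₅) (⇑Φ) x =
        opA ε lam A (fun X => ContinuousLinearMap.adjoint (h X)) (opA ε lam A (⇑f) (⇑Φ)) x) :
    (bPair b (⇑p₁) (⇑h) = bPair b' (⇑f) (⇑p₂) ∧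
      bPair b' (⇑f) (⇑p₂) = bPair b' (⇑f) (fun X => ContinuousLinearMap.adjoint (p₃ X))) ∧
    (bPair b (⇑p₁) (⇑h) = bPair b (⇑g) (⇑p₄) ∧
      bPair b (⇑g) (⇑p₄) = bPair b (⇑g) (fun X => ContinuousLinearMap.adjoint (p₅ X))) := by
  obtain ⟨κ0, hκ, hpl, hpi⟩ := wker_plancherel hε lam A
  have hκ' : (κ0 : ℂ) ≠ 0 := by exact_mod_cast hκ.ne'
  have lf := KL2_of_TC hε lam hA b' b'' f hf
  have lg := KL2_of_TC hε lam hA b b' g hg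
  have lh := KL2_of_TC hε lam hA b b'' h hh
  have lfa := KL2_adjS hA b' b'' f lf
  have lga := KL2_adjS hA b b' g lg
  have lha := KL2_adjS hA b b'' h lh
  have l1 := KL2_comp hε lam hA b b' b'' f g p₁ hp₁ lf lg
  have l2 := KL2_comp hε lam hA b' b b'' h (adjS g) p₂ hp₂ lh lga
  have l3 := KL2_comp hε lam hA b'' b b' g (adjS h) p₃ hp₃ lg lha
  have l4 := KL2_comp hε lam hA b b'' b' (adjS f) h p₄ hp₄ lfa lh
  have l5 := KL2_comp hε lam hA b' b'' b (adjS h) f p₅ hp₅ lha lf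
  have c1 := mker_comp hε lam hA b b' b'' f g p₁ hp₁ lf lg
  have c2 := mker_comp hε lam hA b' b b'' h (adjS g) p₂ hp₂ lh lga
  have c3 := mker_comp hε lam hA b'' b b' g (adjS h) p₃ hp₃ lg lha
  have c4 := mker_comp hε lam hA b b'' b' (adjS f) h p₄ hp₄ lfa lh
  have c5 := mker_comp hε lam hA b' b'' b (adjS h) f p₅ hp₅ lha lf
  have c3s := Measure.measurePreserving_swap.quasiMeasurePreserving.ae c3
  have c5s := Measure.measurePreserving_swap.quasiMeasurePreserving.ae c5
  have mf := mker_measurable ε lam hA b' b'' f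
  have mg := mker_measurable ε lam hA b b' g
  have mh := mker_measurable ε lam hA b b'' h
  have P1 := mker_pair lam hA hκ hpl hpi b b'' p₁ h l1 lh
  have P2 := mker_pair lam hA hκ hpl hpi b' b'' f p₂ lf l2
  have P3 := mker_pair lam hA hκ hpl hpi b' b'' f (adjS p₃) lf (KL2_adjS hA b'' b' p₃ l3)
  have P4 := mker_pair lam hA hκ hpl hpi b b' g p₄ lg l4
  have P5 := mker_pair lam hA hκ hpl hpi b b' g (adjS p₅) lg (KL2_adjS hA b' b p₅ l5)
  have t1 := kernel_triple_one (volume.prod Measure.count) (volume.prod Measure.count)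
    (volume.prod Measure.count) mf mg mh lf lg lh
  have t2 := kernel_triple_two (volume.prod Measure.count) (volume.prod Measure.count)
    (volume.prod Measure.count) mf mg mh lf lg lh
  have E1 : (κ0 : ℂ) * bPair b (⇑p₁) (⇑h) = _ := P1.symm.trans ((integral_congr_ae (by
    filter_upwards [c1] with q hq
    rw [hq])).trans t1)
  have E2 : (κ0 : ℂ) * bPair b' (⇑f) (⇑p₂) = _ := P2.symm
  have E3 : (κ0 : ℂ) * bPair b' (⇑f) (fun X => ContinuousLinearMap.adjoint (p₃ X)) = _ := P3.symm
  have E4 : (κ0 : ℂ) * bPair b (⇑g) (⇑p₄) = _ := P4.symm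
  have E5 : (κ0 : ℂ) * bPair b (⇑g) (fun X => ContinuousLinearMap.adjoint (p₅ X)) = _ := P5.symm
  have E1' : (κ0 : ℂ) * bPair b (⇑p₁) (⇑h) = _ := E1.trans (t1.symm.trans t2)
  have F2 : bPair b (⇑p₁) (⇑h) = bPair b' (⇑f) (⇑p₂) := by
    refine mul_left_cancel₀ hκ' (E1.trans (Eq.trans ?_ E2.symm))
    refine integral_congr_ae ?_
    filter_upwards [c2] with q hq
    rw [hq]
    simp only [mker_adjS]
  have F3 : bPair b (⇑p₁) (⇑h) =
      bPair b' (⇑f) (fun X => ContinuousLinearMap.adjoint (p₃ X)) := by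
    refine mul_left_cancel₀ hκ' (E1.trans (Eq.trans ?_ E3.symm))
    refine integral_congr_ae ?_
    filter_upwards [c3s] with q hq
    have hq' : mker ε lam A b'' b' p₃ (q.2, q.1) = _ := hq
    rw [mker_adjS, hq', ← integral_conj]
    simp only [mker_adjS, map_mul, Complex.conj_conj, Prod.fst_swap, Prod.snd_swap, mul_comm]
  have F4 : bPair b (⇑p₁) (⇑h) = bPair b (⇑g) (⇑p₄) := by
    refine mul_left_cancel₀ hκ' (E1'.trans (Eq.trans ?_ E4.symm))
    refine integral_congr_ae ?_
    filter_upwards [c4] with q hq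
    rw [hq]
    simp only [mker_adjS]
  have F5 : bPair b (⇑p₁) (⇑h) =
      bPair b (⇑g) (fun X => ContinuousLinearMap.adjoint (p₅ X)) := by
    refine mul_left_cancel₀ hκ' (E1'.trans (Eq.trans ?_ E5.symm))
    refine integral_congr_ae ?_
    filter_upwards [c5s] with q hq
    have hq' : mker ε lam A b' b p₅ (q.2, q.1) = _ := hq
    rw [mker_adjS, hq', ← integral_conj]
    simp only [mker_adjS, map_mul, Complex.conj_conj, Prod.fst_swap, Prod.snd_swap, mul_comm]
  exact ⟨⟨F2, F2.symm.trans F3⟩, ⟨F4, F4.symm.trans F5⟩⟩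

end PartD3

theorem statement_7 {d : ℕ} (ε lam : ℝ) (hε : 0 < ε) (hlam : 0 < lam)
    {H H' H'' : Type*}
    [NormedAddCommGroup H] [InnerProductSpace ℂ H] [CompleteSpace H]
    [TopologicalSpace.SeparableSpace H]
    [NormedAddCommGroup H'] [InnerProductSpace ℂ H'] [CompleteSpace H']
    [TopologicalSpace.SeparableSpace H']
    [NormedAddCommGroup H''] [InnerProductSpace ℂ H''] [CompleteSpace H'']
    [TopologicalSpace.SeparableSpace H'']
    (A : Ed d → Ed d) (hA : IsPolyVF A)
    (f : SchwartzMap (Ed d × Ed d) (H' →L[ℂ] H''))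
    (g : SchwartzMap (Ed d × Ed d) (H →L[ℂ] H'))
    (h : SchwartzMap (Ed d × Ed d) (H →L[ℂ] H''))
    (hf : TCSchwartz f) (hg : TCSchwartz g) (hh : TCSchwartz h)
    -- p₁ = f ♯ g
    (p₁ : SchwartzMap (Ed d × Ed d) (H →L[ℂ] H''))
    (hp₁ : ∀ (Ψ : SchwartzMap (Ed d) H) (x : Ed d),
      opA ε lam A (⇑p₁) (⇑Ψ) x = opA ε lam A (⇑f) (opA ε lam A (⇑g) (⇑Ψ)) x)
    -- p₂ = h ♯ g*
    (p₂ : SchwartzMap (Ed d × Ed d) (H' →L[ℂ] H''))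
    (hp₂ : ∀ (Φ : SchwartzMap (Ed d) H') (x : Ed d),
      opA ε lam A (⇑p₂) (⇑Φ) x =
        opA ε lam A (⇑h) (opA ε lam A (fun X => ContinuousLinearMap.adjoint (g X)) (⇑Φ)) x)
    -- p₃ = g ♯ h*
    (p₃ : SchwartzMap (Ed d × Ed d) (H'' →L[ℂ] H'))
    (hp₃ : ∀ (Ξ : SchwartzMap (Ed d) H'') (x : Ed d),
      opA ε lam A (⇑p₃) (⇑Ξ) x =
        opA ε lam A (⇑g) (opA ε lam A (fun X => ContinuousLinearMap.adjoint (h X)) (⇑Ξ)) x)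
    -- p₄ = f* ♯ h
    (p₄ : SchwartzMap (Ed d × Ed d) (H →L[ℂ] H'))
    (hp₄ : ∀ (Ψ : SchwartzMap (Ed d) H) (x : Ed d),
      opA ε lam A (⇑p₄) (⇑Ψ) x =
        opA ε lam A (fun X => ContinuousLinearMap.adjoint (f X)) (opA ε lam A (⇑h) (⇑Ψ)) x)
    -- p₅ = h* ♯ f
    (p₅ : SchwartzMap (Ed d × Ed d) (H' →L[ℂ] H))
    (hp₅ : ∀ (Φ : SchwartzMap (Ed d) H') (x : Ed d),
      opA ε lam A (⇑p₅) (⇑Φ) x =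
        opA ε lam A (fun X => ContinuousLinearMap.adjoint (h X)) (opA ε lam A (⇑f) (⇑Φ)) x) :
    (tcPair (⇑p₁) (⇑h) = tcPair (⇑f) (⇑p₂) ∧
      tcPair (⇑f) (⇑p₂) = tcPair (⇑f) (fun X => ContinuousLinearMap.adjoint (p₃ X))) ∧
    (tcPair (⇑p₁) (⇑h) = tcPair (⇑g) (⇑p₄) ∧
      tcPair (⇑g) (⇑p₄) = tcPair (⇑g) (fun X => ContinuousLinearMap.adjoint (p₅ X))) := by
  obtain ⟨hA1, -⟩ := hA
  let b := (exists_hilbertBasis ℂ H).choose_spec.choose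
  let b' := (exists_hilbertBasis ℂ H').choose_spec.choose
  let b'' := (exists_hilbertBasis ℂ H'').choose_spec.choose
  haveI : Countable (exists_hilbertBasis ℂ H).choose := countable_of_hilbertBasis b
  haveI : Countable (exists_hilbertBasis ℂ H').choose := countable_of_hilbertBasis b'
  haveI : Countable (exists_hilbertBasis ℂ H'').choose := countable_of_hilbertBasis b''
  letI : MeasurableSpace (exists_hilbertBasis ℂ H).choose := ⊤
  letI : MeasurableSpace (exists_hilbertBasis ℂ H').choose := ⊤
  letI : MeasurableSpace (exists_hilbertBasis ℂ H'').choose := ⊤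
  haveI : DiscreteMeasurableSpace (exists_hilbertBasis ℂ H).choose := ⟨fun _ => trivial⟩
  haveI : DiscreteMeasurableSpace (exists_hilbertBasis ℂ H').choose := ⟨fun _ => trivial⟩
  haveI : DiscreteMeasurableSpace (exists_hilbertBasis ℂ H'').choose := ⟨fun _ => trivial⟩
  exact pairing_identities hε lam b b' b'' hA1.continuous f g h hf hg hh p₁ hp₁ p₂ hp₂ p₃ hp₃
    p₄ hp₄ p₅ hp₅

end
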